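/- arXiv:1505.07665 — 8 statements merged into one kernel-verified Lean document; each statement's English description precedes it below -/
import Mathlib

section
/- For all integers k ≥ 1 and n ≥ 1, every equivalence class of the k-twist congruence ≡ᵏ on the symmetric group S_n is an interval of the weak order: it has a weak-order minimum μ and a weak-order maximum ω, and it consists precisely of all permutations σ with μ ≤ σ ≤ ω in the weak order. -/
/-!
Call a permutation `z` *bottom* if no descent of `z` can be undone by a `k`-twist step. The heart of
the proof is that the up-set `{y | z ≤ y}` of a bottom permutation is a union of `k`-twist classes
(`IsBottom.weakLE_iff_of_cong`). Indeed, suppose that `z ≤ y` and that a step turns an adjacent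
descent `c a` of `y` into `a c`, with `k` values `b ∈ (a, c)` further right. If `z` does not lie
below the result, then `c` precedes `a` in `z`. Since `z ≤ y`, all those `b` are to the right of `a`
in `z`, and no value of the interval `(a, c)` sits between `c` and `a` in `z`. So the stretch of `z`
from `c` to `a` only has entries `≥ c` or `≤ a`, hence contains an adjacent descent `c' a'` with
`a' ≤ a` and `c ≤ c'`, which a step can undo: a contradiction.

Every class contains a bottom permutation, namely any member with fewest coinversions
(`exists_isBottom`), and by the above it is the minimum of the class. Reversing values preserves
twist steps and reverses the weak order, which yields the maximum `ω`. Finally, if `μ ≤ σ ≤ ω` and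
`z` is a bottom permutation of the class of `σ`, then `μ ≤ z` because `μ ≤ σ`, and `z ≤ μ` because
`z ≤ ω`; hence `z = μ`, and `σ` is in the class of `μ`.
-/

/-- The (right) weak order on permutations of `Fin n`: `τ ≤ σ` iff every coinversion of `τ`
(pair of values `i < j` whose positions in `τ` are inverted) is a coinversion of `σ`. -/
def weakLE {n : ℕ} (τ σ : Equiv.Perm (Fin n)) : Prop :=
  ∀ i j : Fin n, i < j → τ.symm j < τ.symm i → σ.symm j < σ.symm i
/-- One rewriting step of the `k`-twist congruence: exchange two adjacent entries of the
one-line notation (positions `p` and `q = p+1`) provided at least `k` values strictly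
between the two exchanged values occur at later positions. -/
def twistStep (k : ℕ) {n : ℕ} (τ τ' : Equiv.Perm (Fin n)) : Prop :=
  ∃ p q : Fin n, (q : ℕ) = (p : ℕ) + 1 ∧ τ' = τ * Equiv.swap p q ∧
    k ≤ (Finset.univ.filter (fun b : Fin n =>
      min (τ p) (τ q) < b ∧ b < max (τ p) (τ q) ∧ q < τ.symm b)).card

/-- The `k`-twist congruence `≡ᵏ` on permutations of `Fin n`: the equivalence relation
generated by the rewriting rule `twistStep`. -/
def twistCong (k : ℕ) {n : ℕ} : Equiv.Perm (Fin n) → Equiv.Perm (Fin n) → Prop :=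
  Relation.EqvGen (twistStep k)

theorem twistCong.symm {k n : ℕ} {σ τ : Equiv.Perm (Fin n)} (h : twistCong k σ τ) :
    twistCong k τ σ := Relation.EqvGen.symm _ _ h

theorem twistCong.trans {k n : ℕ} {σ τ ρ : Equiv.Perm (Fin n)} (h : twistCong k σ τ)
    (h' : twistCong k τ ρ) : twistCong k σ ρ := Relation.EqvGen.trans _ _ _ h h'

theorem weakLE.refl {n : ℕ} (σ : Equiv.Perm (Fin n)) : weakLE σ σ := fun _ _ _ h => h

theorem weakLE.trans {n : ℕ} {σ τ ρ : Equiv.Perm (Fin n)} (h : weakLE σ τ) (h' : weakLE τ ρ) :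
    weakLE σ ρ := fun i j hij hc => h' i j hij (h i j hij hc)

/-- Two permutations with the same coinversions induce the same order of values by position, so the
change of position between them is a strictly monotone self-map of `Fin n`, hence trivial. -/
theorem weakLE.antisymm {n : ℕ} {σ τ : Equiv.Perm (Fin n)} (h : weakLE σ τ) (h' : weakLE τ σ) :
    σ = τ := by
  have key : ∀ i j, σ.symm i < σ.symm j → τ.symm i < τ.symm j := by
    intro i j hc
    rcases lt_trichotomy i j with hij | rfl | hij
    · by_contra hn
      have hne : τ.symm i ≠ τ.symm j := fun e => hij.ne (τ.symm.injective e)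
      exact absurd (h' i j hij (lt_of_le_of_ne (not_lt.mp hn) hne.symm)) hc.not_gt
    · exact absurd hc (lt_irrefl _)
    · exact h j i hij hc
  have hm : StrictMono (fun p => τ.symm (σ p)) := by
    intro p q hpq
    exact key _ _ (by simpa using hpq)
  have hid : (fun p => τ.symm (σ p)) = id := by
    have hr : Set.range (fun p => τ.symm (σ p)) = Set.range (id : Fin n → Fin n) := by
      rw [Set.range_id]
      exact (σ.trans τ.symm).surjective.range_eq
    exact (StrictMono.range_inj hm strictMono_id).mp hr
  ext p
  have := congrFun hid p
  simp only [id] at this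
  rw [Equiv.symm_apply_eq] at this
  rw [this]

theorem swap_lt_swap_iff {n : ℕ} {p q s r : Fin n} (hpq : (q : ℕ) = (p : ℕ) + 1)
    (h1 : ¬ (s = p ∧ r = q)) (h2 : ¬ (s = q ∧ r = p)) :
    Equiv.swap p q s < Equiv.swap p q r ↔ s < r := by
  simp only [Equiv.swap_apply_def]
  simp only [Fin.ext_iff, Fin.lt_def] at *
  split_ifs <;> omega

theorem lt_swap_iff {n : ℕ} {p q s : Fin n} (hpq : (q : ℕ) = (p : ℕ) + 1) :
    q < Equiv.swap p q s ↔ q < s := by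
  simp only [Equiv.swap_apply_def]
  simp only [Fin.ext_iff, Fin.lt_def] at *
  split_ifs <;> omega

theorem mul_swap_symm_apply {n : ℕ} (y : Equiv.Perm (Fin n)) (p q v : Fin n) :
    (y * Equiv.swap p q).symm v = Equiv.swap p q (y.symm v) := by
  rw [Equiv.symm_apply_eq]; simp

theorem twistStep.symm {k n : ℕ} {y y' : Equiv.Perm (Fin n)} (h : twistStep k y y') :
    twistStep k y' y := by
  obtain ⟨p, q, hpq, rfl, hc⟩ := h
  refine ⟨p, q, hpq, by simp [mul_assoc], ?_⟩
  simp only [mul_swap_symm_apply, lt_swap_iff hpq]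
  simpa [min_comm, max_comm] using hc

/-- `z` is the bottom of its `k`-twist class in the local sense: no adjacent descent of `z` may be
exchanged by a `k`-twist step. -/
def IsBottom (k : ℕ) {n : ℕ} (z : Equiv.Perm (Fin n)) : Prop :=
  ∀ p q : Fin n, (q : ℕ) = (p : ℕ) + 1 → z q < z p →
    (Finset.univ.filter (fun b : Fin n => z q < b ∧ b < z p ∧ q < z.symm b)).card < k

/-- Discrete intermediate value principle: a stretch of values avoiding the open interval `(a, c)`
that starts at or above `c` and ends at or below `a` jumps over `(a, c)` in a single step. -/
theorem exists_adjacent_jump {n : ℕ} (f : Fin n → Fin n) {a c : Fin n} (hac : a < c) (t : Fin n)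
    (ht : f t ≤ a) (d : ℕ) : ∀ s : Fin n, (t : ℕ) = s + d → c ≤ f s →
    (∀ r, s ≤ r → r ≤ t → f r ≤ a ∨ c ≤ f r) →
    ∃ p q : Fin n, (q : ℕ) = (p : ℕ) + 1 ∧ q ≤ t ∧ c ≤ f p ∧ f q ≤ a := by
  induction d with
  | zero =>
    intro s hs hc _
    have : t = s := Fin.ext (by omega)
    subst this
    exact absurd (hc.trans ht) (not_le.mpr hac)
  | succ d ih =>
    intro s hs hc hr
    have hlt : (s : ℕ) + 1 < n := by have := t.isLt; omega
    have hle : (⟨s + 1, hlt⟩ : Fin n) ≤ t := by rw [Fin.le_def]; simp only; omega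
    have hsle : s ≤ (⟨s + 1, hlt⟩ : Fin n) := by rw [Fin.le_def]; simp
    rcases hr ⟨s + 1, hlt⟩ hsle hle with h | h
    · exact ⟨s, ⟨s + 1, hlt⟩, rfl, hle, hc, h⟩
    · exact ih ⟨s + 1, hlt⟩ (by simp only; omega) h (fun r h1 h2 => hr r (hsle.trans h1) h2)

theorem mul_swap_weakLE {n : ℕ} {y : Equiv.Perm (Fin n)} {p q : Fin n}
    (hpq : (q : ℕ) = (p : ℕ) + 1) (hd : y q < y p) : weakLE (y * Equiv.swap p q) y := by
  intro i j hij hc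
  rw [mul_swap_symm_apply, mul_swap_symm_apply] at hc
  rw [swap_lt_swap_iff hpq] at hc
  · exact hc
  · rintro ⟨rfl, rfl⟩
    simp only [Equiv.swap_apply_left, Equiv.swap_apply_right, Fin.lt_def] at hc
    omega
  · rintro ⟨rfl, rfl⟩
    simp only [Equiv.apply_symm_apply] at hd
    exact absurd hij hd.not_gt

/-- The central step: undoing a descent by a twist step cannot leave the up-set of a bottom
permutation. -/
theorem IsBottom.weakLE_mul_swap {k n : ℕ} {z y : Equiv.Perm (Fin n)} (hz : IsBottom k z)
    {p q : Fin n} (hpq : (q : ℕ) = (p : ℕ) + 1)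
    (hk : k ≤ (Finset.univ.filter (fun b : Fin n =>
      y q < b ∧ b < y p ∧ q < y.symm b)).card)
    (h : weakLE z y) : weakLE z (y * Equiv.swap p q) := by
  intro i j hij hc
  have hy := h i j hij hc
  rw [mul_swap_symm_apply, mul_swap_symm_apply]
  by_cases hcase : y.symm j = p ∧ y.symm i = q
  swap
  · rw [swap_lt_swap_iff hpq hcase]
    · exact hy
    · rintro ⟨h1, h2⟩
      rw [h1, h2, Fin.lt_def] at hy
      omega
  exfalso
  obtain ⟨hj, hi⟩ := hcase
  have hj' : y p = j := by rw [← hj]; simp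
  have hi' : y q = i := by rw [← hi]; simp
  rw [hj', hi'] at hk
  -- A value of `(i, j)` placed between `j` and `i` in `z` would sit strictly between the adjacent
  -- positions `p` and `q` in `y`.
  have havoid : ∀ r, z.symm j ≤ r → r ≤ z.symm i → z r ≤ i ∨ j ≤ z r := by
    intro r h1 h2
    by_contra! hcon
    obtain ⟨h3, h4⟩ := hcon
    have hr1 : z.symm j ≠ r := by rintro rfl; simp at h4
    have hr2 : r ≠ z.symm i := by rintro rfl; simp at h3
    have a1 := h _ _ h4 (by simpa using lt_of_le_of_ne h1 hr1)
    have a2 := h _ _ h3 (by simpa using lt_of_le_of_ne h2 hr2)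
    rw [hj, Fin.lt_def] at a1
    rw [hi, Fin.lt_def] at a2
    omega
  obtain ⟨p', q', hpq', hle, hcp, haq⟩ := exists_adjacent_jump z hij (z.symm i) (by simp)
    ((z.symm i : ℕ) - z.symm j) (z.symm j) (by rw [Fin.lt_def] at hc; omega) (by simp) havoid
  have hbot := hz p' q' hpq' (haq.trans_lt (hij.trans_le hcp))
  refine absurd (hk.trans (Finset.card_le_card ?_)) (not_le.mpr hbot)
  intro b
  simp only [Finset.mem_filter, Finset.mem_univ, true_and]
  rintro ⟨hb1, hb2, hb3⟩
  refine ⟨haq.trans_lt hb1, hb2.trans_le hcp, hle.trans_lt ?_⟩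
  by_contra hn
  have hne : z.symm b ≠ z.symm i := fun e => hb1.ne' (z.symm.injective e)
  have := h i b hb1 (lt_of_le_of_ne (not_lt.mp hn) hne)
  rw [hi] at this
  exact absurd this hb3.not_gt

theorem IsBottom.weakLE_of_step {k n : ℕ} {z y y' : Equiv.Perm (Fin n)} (hz : IsBottom k z)
    (hs : twistStep k y y') (h : weakLE z y) : weakLE z y' := by
  obtain ⟨p, q, hpq, rfl, hk⟩ := hs
  have hne : p ≠ q := by rintro rfl; omega
  rcases lt_or_gt_of_ne (fun e => hne (y.injective e)) with hlt | hlt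
  · have := mul_swap_weakLE (y := y * Equiv.swap p q) hpq (by simpa using hlt)
    rw [mul_assoc, Equiv.swap_mul_self, mul_one] at this
    exact h.trans this
  · rw [min_eq_right hlt.le, max_eq_left hlt.le] at hk
    exact hz.weakLE_mul_swap hpq hk h

theorem IsBottom.weakLE_iff_of_cong {k n : ℕ} {z y y' : Equiv.Perm (Fin n)} (hz : IsBottom k z)
    (hc : twistCong k y y') : weakLE z y ↔ weakLE z y' := by
  induction hc with
  | rel _ _ h => exact ⟨hz.weakLE_of_step h, hz.weakLE_of_step h.symm⟩
  | refl _ => rfl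
  | symm _ _ _ ih => exact ih.symm
  | trans _ _ _ _ _ ih1 ih2 => exact ih1.trans ih2

theorem exists_isBottom (k : ℕ) {n : ℕ} (τ : Equiv.Perm (Fin n)) :
    ∃ z, twistCong k z τ ∧ IsBottom k z := by
  classical
  let inv : Equiv.Perm (Fin n) → Finset (Fin n × Fin n) := fun σ =>
    Finset.univ.filter (fun x => x.1 < x.2 ∧ σ.symm x.2 < σ.symm x.1)
  obtain ⟨z, hz, hmin⟩ := Set.exists_min_image {σ | twistCong k σ τ} (fun σ => (inv σ).card)
    (Set.toFinite _) ⟨τ, Relation.EqvGen.refl τ⟩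
  refine ⟨z, hz, ?_⟩
  intro p q hpq hd
  by_contra! hk
  have hstep : twistStep k z (z * Equiv.swap p q) := by
    refine ⟨p, q, hpq, rfl, ?_⟩
    rwa [min_eq_right hd.le, max_eq_left hd.le]
  have hle := hmin (z * Equiv.swap p q)
    (twistCong.trans (twistCong.symm (Relation.EqvGen.rel _ _ hstep)) hz)
  refine absurd hle (not_le.mpr (Finset.card_lt_card ?_))
  rw [Finset.ssubset_iff_of_subset]
  · have hlt : p < q := by rw [Fin.lt_def]; omega
    refine ⟨(z q, z p), ?_, ?_⟩
    · simp [inv, hd, hlt]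
    · simp only [inv, Finset.mem_filter, mul_swap_symm_apply]
      simp [hlt.le]
  · intro x
    simp only [inv, Finset.mem_filter, Finset.mem_univ, true_and]
    exact fun hx => ⟨hx.1, mul_swap_weakLE hpq hd _ _ hx.1 hx.2⟩

/-- Reversal of values, `σ ↦ (n + 1 - σ₁) ⋯ (n + 1 - σₙ)` in one-line notation. -/
def valueRev {n : ℕ} (σ : Equiv.Perm (Fin n)) : Equiv.Perm (Fin n) := Fin.revPerm * σ

theorem valueRev_apply {n : ℕ} (σ : Equiv.Perm (Fin n)) (p : Fin n) :
    valueRev σ p = Fin.rev (σ p) := rfl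

theorem valueRev_symm_apply {n : ℕ} (σ : Equiv.Perm (Fin n)) (v : Fin n) :
    (valueRev σ).symm v = σ.symm (Fin.rev v) := rfl

theorem valueRev_valueRev {n : ℕ} (σ : Equiv.Perm (Fin n)) : valueRev (valueRev σ) = σ := by
  ext p; simp [valueRev_apply]

theorem weakLE.valueRev {n : ℕ} {σ τ : Equiv.Perm (Fin n)} (h : weakLE σ τ) :
    weakLE (valueRev τ) (valueRev σ) := by
  intro i j hij hc
  rw [valueRev_symm_apply, valueRev_symm_apply] at *
  by_contra hn
  have hne : σ.symm (Fin.rev i) ≠ σ.symm (Fin.rev j) := fun e =>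
    hij.ne (Fin.rev_injective (σ.symm.injective e))
  exact absurd (h _ _ (Fin.rev_lt_rev.mpr hij) (lt_of_le_of_ne (not_lt.mp hn) hne)) hc.not_gt

theorem twistStep.valueRev {k n : ℕ} {σ τ : Equiv.Perm (Fin n)} (h : twistStep k σ τ) :
    twistStep k (valueRev σ) (valueRev τ) := by
  obtain ⟨p, q, hpq, rfl, hk⟩ := h
  refine ⟨p, q, hpq, (mul_assoc _ _ _).symm, hk.trans ?_⟩
  refine Finset.card_le_card_of_injOn Fin.rev ?_ Fin.rev_injective.injOn
  intro b
  simp only [Finset.coe_filter, Finset.mem_univ, true_and, Set.mem_ofPred_eq, valueRev_symm_apply,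
    valueRev_apply, Fin.rev_rev, min_lt_iff, lt_max_iff, Fin.rev_lt_rev]
  tauto

theorem twistCong.valueRev {k n : ℕ} {σ τ : Equiv.Perm (Fin n)} (h : twistCong k σ τ) :
    twistCong k (valueRev σ) (valueRev τ) := by
  induction h with
  | rel _ _ h => exact Relation.EqvGen.rel _ _ h.valueRev
  | refl _ => exact Relation.EqvGen.refl _
  | symm _ _ _ ih => exact twistCong.symm ih
  | trans _ _ _ _ _ ih1 ih2 => exact twistCong.trans ih1 ih2

/-- For `k ≥ 1` and `n ≥ 1`, every equivalence class of the `k`-twist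
congruence on `S_n` is an interval of the weak order: it has a weak-order minimum `μ` and a
weak-order maximum `ω`, and consists precisely of the permutations `σ` with `μ ≤ σ ≤ ω`. -/
theorem twist_classes_are_weak_order_intervals
    (k n : ℕ) (hk : 1 ≤ k) (hn : 1 ≤ n) (τ : Equiv.Perm (Fin n)) :
    ∃ μ ω : Equiv.Perm (Fin n), twistCong k μ τ ∧ twistCong k ω τ ∧
      ∀ σ : Equiv.Perm (Fin n), (twistCong k σ τ ↔ (weakLE μ σ ∧ weakLE σ ω)) := by
  obtain ⟨μ, hμ, hμb⟩ := exists_isBottom k τ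
  obtain ⟨ω', hω', hωb⟩ := exists_isBottom k (valueRev τ)
  have hω : twistCong k (valueRev ω') τ := by
    have := hω'.valueRev
    rwa [valueRev_valueRev] at this
  refine ⟨μ, valueRev ω', hμ, hω, fun σ => ⟨fun hσ => ⟨?_, ?_⟩, ?_⟩⟩
  · exact (hμb.weakLE_iff_of_cong (hμ.trans hσ.symm)).mp (weakLE.refl μ)
  · have := ((hωb.weakLE_iff_of_cong (hω'.trans hσ.valueRev.symm)).mp
      (weakLE.refl ω')).valueRev
    rwa [valueRev_valueRev] at this
  · rintro ⟨h1, h2⟩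
    obtain ⟨z, hz, hzb⟩ := exists_isBottom k σ
    have hzσ : weakLE z σ := (hzb.weakLE_iff_of_cong hz).mp (weakLE.refl z)
    have hzμ : weakLE z μ :=
      (hzb.weakLE_iff_of_cong (hω.trans hμ.symm)).mp (hzσ.trans h2)
    have hμz : weakLE μ z := (hμb.weakLE_iff_of_cong hz).mpr h1
    have hEq : z = μ := hzμ.antisymm hμz
    subst hEq
    exact hz.symm.trans hμ
end

section
/- For every integer k ≥ 1, the non-singleton classes of the k-twist congruence ≡ᵏ on S_{k+2} are exactly the pairs {1(k+2)(σ₁+1)⋯(σ_k+1), (k+2)1(σ₁+1)⋯(σ_k+1)} for σ ∈ S_k (in one-line notation); consequently, the number of ≡ᵏ-classes of S_{k+2} equals (k+2)! − k!. -/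
/-- `τ` has one-line notation `1 (m+2) (σ₁+1) ⋯ (σ_m+1)` (0-indexed values in `Fin (m+2)`). -/
def firstForm (m : ℕ) (σ : Equiv.Perm (Fin m)) (τ : Equiv.Perm (Fin (m + 2))) : Prop :=
  τ ⟨0, by omega⟩ = ⟨0, by omega⟩ ∧ τ ⟨1, by omega⟩ = ⟨m + 1, by omega⟩ ∧
  ∀ i : Fin m, τ ⟨(i : ℕ) + 2, by omega⟩ = ⟨(σ i : ℕ) + 1, by omega⟩

/-- `τ` has one-line notation `(m+2) 1 (σ₁+1) ⋯ (σ_m+1)` (0-indexed values in `Fin (m+2)`). -/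
def secondForm (m : ℕ) (σ : Equiv.Perm (Fin m)) (τ : Equiv.Perm (Fin (m + 2))) : Prop :=
  τ ⟨0, by omega⟩ = ⟨m + 1, by omega⟩ ∧ τ ⟨1, by omega⟩ = ⟨0, by omega⟩ ∧
  ∀ i : Fin m, τ ⟨(i : ℕ) + 2, by omega⟩ = ⟨(σ i : ℕ) + 1, by omega⟩

section TwistHelpers

/-- The first two positions hold the extreme values, in one order or the other. -/
def extremeStart (k : ℕ) (τ : Equiv.Perm (Fin (k + 2))) : Prop :=
  (((τ ⟨0, by omega⟩ : Fin (k + 2)) : ℕ) = 0 ∧ ((τ ⟨1, by omega⟩ : Fin (k + 2)) : ℕ) = k + 1) ∨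
  (((τ ⟨0, by omega⟩ : Fin (k + 2)) : ℕ) = k + 1 ∧ ((τ ⟨1, by omega⟩ : Fin (k + 2)) : ℕ) = 0)

/-- The transposition of the first two positions. -/
def firstSwap (k : ℕ) : Equiv.Perm (Fin (k + 2)) :=
  Equiv.swap ⟨0, by omega⟩ ⟨1, by omega⟩

lemma firstSwap_zero (k : ℕ) : firstSwap k ⟨0, by omega⟩ = ⟨1, by omega⟩ :=
  Equiv.swap_apply_left _ _

lemma firstSwap_one (k : ℕ) : firstSwap k ⟨1, by omega⟩ = ⟨0, by omega⟩ :=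
  Equiv.swap_apply_right _ _

lemma firstSwap_add_two (k : ℕ) (i : Fin k) :
    firstSwap k ⟨(i : ℕ) + 2, by omega⟩ = ⟨(i : ℕ) + 2, by omega⟩ := by
  apply Equiv.swap_apply_of_ne_of_ne <;> simp [Fin.ext_iff]

lemma mul_firstSwap_mul_firstSwap (k : ℕ) (τ : Equiv.Perm (Fin (k + 2))) :
    τ * firstSwap k * firstSwap k = τ := by
  rw [mul_assoc, firstSwap, Equiv.swap_mul_self, mul_one]

lemma mul_firstSwap_ne (k : ℕ) (τ : Equiv.Perm (Fin (k + 2))) : τ * firstSwap k ≠ τ := by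
  intro h
  have h0 := congrArg (fun f : Equiv.Perm (Fin (k + 2)) => f ⟨0, by omega⟩) h
  simp only [Equiv.Perm.mul_apply, firstSwap_zero] at h0
  simpa [Fin.ext_iff] using τ.injective h0

lemma extremeStart_mul (k : ℕ) (τ : Equiv.Perm (Fin (k + 2))) (h : extremeStart k τ) :
    extremeStart k (τ * firstSwap k) := by
  simp only [extremeStart, Equiv.Perm.mul_apply, firstSwap_zero, firstSwap_one] at h ⊢
  tauto

lemma fin_forall_add_two {k : ℕ} {p : Fin (k + 2) → Prop} (h0 : p ⟨0, by omega⟩)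
    (h1 : p ⟨1, by omega⟩) (h2 : ∀ i : Fin k, p ⟨(i : ℕ) + 2, by omega⟩) : ∀ x, p x := by
  rintro ⟨x, hx⟩
  match x, hx with
  | 0, _ => exact h0
  | 1, _ => exact h1
  | j + 2, hx => exact h2 ⟨j, by omega⟩

/-- At most `k - p` values occur after position `q = p + 1`, which forces `p = 0`; and at most
`max - min - 1` values lie strictly between, which forces the exchanged values to be the
extremes. -/
lemma twistStep_imp (k : ℕ) (hk : 1 ≤ k) (τ τ' : Equiv.Perm (Fin (k + 2)))
    (h : twistStep k τ τ') : extremeStart k τ ∧ τ' = τ * firstSwap k := by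
  obtain ⟨p, q, hq, rfl, hc⟩ := h
  have h1 : k ≤ (Finset.Ioi q).card := by
    refine hc.trans (Finset.card_le_card_of_injOn τ.symm ?_ τ.symm.injective.injOn)
    intro b hb
    simp at hb ⊢
    exact hb.2.2
  have h2 : k ≤ (Finset.Ioo (min (τ p) (τ q)) (max (τ p) (τ q))).card := by
    refine hc.trans (Finset.card_le_card ?_)
    intro b hb
    simp only [Finset.mem_filter, Finset.mem_Ioo] at hb ⊢
    exact ⟨hb.2.1, hb.2.2.1⟩
  rw [Fin.card_Ioi] at h1
  rw [Fin.card_Ioo] at h2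
  have hp : p = ⟨0, Nat.zero_lt_succ _⟩ := Fin.ext (by change (p : ℕ) = 0; omega)
  have hq' : q = ⟨1, Nat.succ_lt_succ (Nat.zero_lt_succ _)⟩ :=
    Fin.ext (by change (q : ℕ) = 1; omega)
  subst hp hq'
  refine ⟨?_, rfl⟩
  unfold extremeStart
  generalize τ ⟨0, by omega⟩ = a at *
  generalize τ ⟨1, by omega⟩ = b at *
  rcases le_total a b with hab | hab
  · rw [min_eq_left hab, max_eq_right hab] at h2
    omega
  · rw [min_eq_right hab, max_eq_left hab] at h2
    omega

lemma twistStep_of_extremeStart (k : ℕ) (τ : Equiv.Perm (Fin (k + 2)))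
    (h : extremeStart k τ) : twistStep k τ (τ * firstSwap k) := by
  refine ⟨⟨0, by omega⟩, ⟨1, by omega⟩, rfl, rfl, ?_⟩
  -- The `k` witnesses are the values at the positions `2, …, k + 1`.
  have hinj : Function.Injective (fun i : Fin k => τ ⟨(i : ℕ) + 2, by omega⟩) := by
    intro i j hij
    have := τ.injective hij
    simp only [Fin.mk.injEq] at this
    ext; omega
  calc k = (Finset.univ.image (fun i : Fin k => τ ⟨(i : ℕ) + 2, by omega⟩)).card := by
        rw [Finset.card_image_of_injective _ hinj]; simp
    _ ≤ _ := by
      refine Finset.card_le_card ?_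
      intro b hb
      simp only [Finset.mem_image, Finset.mem_univ, true_and] at hb
      obtain ⟨i, rfl⟩ := hb
      have n0 : τ ⟨(i : ℕ) + 2, by omega⟩ ≠ τ ⟨0, by omega⟩ := by simp
      have n1 : τ ⟨(i : ℕ) + 2, by omega⟩ ≠ τ ⟨1, by omega⟩ := by simp
      simp only [Finset.mem_filter, Finset.mem_univ, true_and, Equiv.symm_apply_apply,
        min_lt_iff, lt_max_iff, Fin.lt_def, ne_eq, Fin.ext_iff] at *
      unfold extremeStart at h
      omega

/-- Away from the diagonal the congruence is the single exchange of the first two entries. -/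
lemma twistCong_iff (k : ℕ) (hk : 1 ≤ k) (τ τ' : Equiv.Perm (Fin (k + 2))) :
    twistCong k τ τ' ↔ τ = τ' ∨ (extremeStart k τ ∧ τ' = τ * firstSwap k) := by
  constructor
  · intro h
    induction h with
    | rel x y h => exact Or.inr (twistStep_imp k hk x y h)
    | refl x => exact Or.inl rfl
    | symm x y _ ih =>
      rcases ih with rfl | ⟨h, rfl⟩
      · exact Or.inl rfl
      · exact Or.inr ⟨extremeStart_mul k x h, (mul_firstSwap_mul_firstSwap k x).symm⟩
    | trans x y z _ _ ih1 ih2 =>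
      rcases ih1 with rfl | ⟨h, rfl⟩
      · exact ih2
      · rcases ih2 with rfl | ⟨h', rfl⟩
        · exact Or.inr ⟨h, rfl⟩
        · exact Or.inl (mul_firstSwap_mul_firstSwap k x).symm
  · rintro (rfl | ⟨h, rfl⟩)
    · exact Relation.EqvGen.refl _
    · exact Relation.EqvGen.rel _ _ (twistStep_of_extremeStart k τ h)

lemma secondForm_iff_firstForm_mul (k : ℕ) (σ : Equiv.Perm (Fin k))
    (τ : Equiv.Perm (Fin (k + 2))) :
    secondForm k σ (τ * firstSwap k) ↔ firstForm k σ τ := by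
  simp only [secondForm, firstForm, Equiv.Perm.mul_apply, firstSwap_zero, firstSwap_one,
    firstSwap_add_two]
  tauto

lemma firstForm_iff_secondForm_mul (k : ℕ) (σ : Equiv.Perm (Fin k))
    (τ : Equiv.Perm (Fin (k + 2))) :
    firstForm k σ (τ * firstSwap k) ↔ secondForm k σ τ := by
  rw [← secondForm_iff_firstForm_mul, mul_firstSwap_mul_firstSwap]

lemma secondForm_right_unique (k : ℕ) (σ : Equiv.Perm (Fin k)) (τ τ' : Equiv.Perm (Fin (k + 2)))
    (h : secondForm k σ τ) (h' : secondForm k σ τ') : τ = τ' := by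
  ext1 x
  revert x
  exact fin_forall_add_two (h.1.trans h'.1.symm) (h.2.1.trans h'.2.1.symm)
    (fun i => (h.2.2 i).trans (h'.2.2 i).symm)

lemma secondForm_left_unique (k : ℕ) (σ σ' : Equiv.Perm (Fin k)) (τ : Equiv.Perm (Fin (k + 2)))
    (h : secondForm k σ τ) (h' : secondForm k σ' τ) : σ = σ' := by
  ext i
  have := (h.2.2 i).symm.trans (h'.2.2 i)
  simpa using this

lemma exists_secondForm (k : ℕ) (σ : Equiv.Perm (Fin k)) : ∃ τ, secondForm k σ τ := by
  obtain ⟨f, f0, f1, f2⟩ : ∃ f : Fin (k + 2) → Fin (k + 2),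
      f ⟨0, by omega⟩ = ⟨k + 1, by omega⟩ ∧ f ⟨1, by omega⟩ = ⟨0, by omega⟩ ∧
      ∀ i : Fin k, f ⟨(i : ℕ) + 2, by omega⟩ = ⟨(σ i : ℕ) + 1, by omega⟩ :=
    ⟨Fin.cases (Fin.last (k + 1)) (Fin.cases 0 (fun i => (σ i).succ.castSucc)),
      rfl, rfl, fun _ => rfl⟩
  have hlt : ∀ i : Fin k, (σ i : ℕ) ≠ k := fun i => (σ i).isLt.ne
  have hf : Function.Injective f := by
    refine fin_forall_add_two (fin_forall_add_two ?_ ?_ ?_) (fin_forall_add_two ?_ ?_ ?_)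
      (fun i => fin_forall_add_two ?_ ?_ ?_)
    all_goals
      simp only [f0, f1, f2, Fin.mk.injEq]
      simp [hlt, fun i => (hlt i).symm, Fin.val_inj]
  exact ⟨Equiv.ofBijective f hf.bijective_of_finite, f0, f1, f2⟩

/-- A permutation starting with its largest and then its smallest value has the middle values
elsewhere, and these standardize to a permutation of `Fin k`. -/
lemma exists_secondForm_of_start (k : ℕ) (τ : Equiv.Perm (Fin (k + 2)))
    (h0 : ((τ ⟨0, by omega⟩ : Fin (k + 2)) : ℕ) = k + 1)
    (h1 : ((τ ⟨1, by omega⟩ : Fin (k + 2)) : ℕ) = 0) : ∃ σ, secondForm k σ τ := by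
  have hb : ∀ i : Fin k, 1 ≤ ((τ ⟨(i : ℕ) + 2, by omega⟩ : Fin (k + 2)) : ℕ) ∧
      ((τ ⟨(i : ℕ) + 2, by omega⟩ : Fin (k + 2)) : ℕ) < k + 1 := by
    intro i
    have n0 : τ ⟨(i : ℕ) + 2, by omega⟩ ≠ τ ⟨0, by omega⟩ := by simp
    have n1 : τ ⟨(i : ℕ) + 2, by omega⟩ ≠ τ ⟨1, by omega⟩ := by simp
    simp only [ne_eq, Fin.ext_iff] at n0 n1
    omega
  let g : Fin k → Fin k := fun i =>
    ⟨((τ ⟨(i : ℕ) + 2, by omega⟩ : Fin (k + 2)) : ℕ) - 1, by have := hb i; omega⟩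
  have hg : Function.Injective g := by
    intro i j hij
    simp only [g, Fin.mk.injEq] at hij
    have hi := hb i
    have hj := hb j
    have := τ.injective (Fin.ext (by omega :
      ((τ ⟨(i : ℕ) + 2, _⟩ : Fin (k + 2)) : ℕ) = τ ⟨(j : ℕ) + 2, _⟩))
    simp only [Fin.mk.injEq] at this
    ext; omega
  refine ⟨Equiv.ofBijective g hg.bijective_of_finite, Fin.ext h0, Fin.ext h1, fun i => ?_⟩
  ext
  have := hb i
  simp only [Equiv.ofBijective_apply, g]
  omega

lemma extremeStart_iff (k : ℕ) (τ : Equiv.Perm (Fin (k + 2))) :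
    extremeStart k τ ↔ ∃ σ, firstForm k σ τ ∨ secondForm k σ τ := by
  constructor
  · rintro (⟨h0, h1⟩ | ⟨h0, h1⟩)
    · obtain ⟨σ, hσ⟩ := exists_secondForm_of_start k (τ * firstSwap k)
        (by rwa [Equiv.Perm.mul_apply, firstSwap_zero])
        (by rwa [Equiv.Perm.mul_apply, firstSwap_one])
      exact ⟨σ, Or.inl ((secondForm_iff_firstForm_mul k σ τ).1 hσ)⟩
    · obtain ⟨σ, hσ⟩ := exists_secondForm_of_start k τ h0 h1
      exact ⟨σ, Or.inr hσ⟩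
  · rintro ⟨σ, h | h⟩
    · exact Or.inl ⟨by rw [h.1], by rw [h.2.1]⟩
    · exact Or.inr ⟨by rw [h.1], by rw [h.2.1]⟩

lemma not_firstForm_and_secondForm (k : ℕ) (σ σ' : Equiv.Perm (Fin k))
    (τ : Equiv.Perm (Fin (k + 2))) (h : firstForm k σ τ) (h' : secondForm k σ' τ) : False := by
  have := h.1.symm.trans h'.1
  simp [Fin.ext_iff] at this

lemma card_secondForm (k : ℕ) :
    Nat.card {τ : Equiv.Perm (Fin (k + 2)) // ∃ σ, secondForm k σ τ} = k.factorial := by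
  choose F hF using exists_secondForm k
  have hbij : Function.Bijective (fun σ : Equiv.Perm (Fin k) =>
      (⟨F σ, σ, hF σ⟩ : {τ : Equiv.Perm (Fin (k + 2)) // ∃ σ, secondForm k σ τ})) := by
    constructor
    · intro σ σ' h
      have h' : F σ = F σ' := congrArg Subtype.val h
      exact secondForm_left_unique k σ σ' (F σ) (hF σ) (h' ▸ hF σ')
    · rintro ⟨τ, σ, hσ⟩
      exact ⟨σ, Subtype.ext (secondForm_right_unique k σ _ _ (hF σ) hσ)⟩
  rw [← Nat.card_eq_of_bijective _ hbij, Nat.card_perm, Nat.card_fin]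

/-- The permutations that are not of the form `(k+2) 1 ⋯` are a transversal of the classes. -/
lemma card_quot_eq (k : ℕ) (hk : 1 ≤ k) :
    Nat.card (Quot (twistCong k (n := k + 2))) =
      Nat.card {τ : Equiv.Perm (Fin (k + 2)) // ¬ ∃ σ, secondForm k σ τ} := by
  symm
  refine Nat.card_eq_of_bijective
    (fun τ => Quot.mk (twistCong k (n := k + 2)) τ.1) ⟨?_, ?_⟩
  · rintro ⟨τ, hτ⟩ ⟨τ', hτ'⟩ h
    have hc : twistCong k τ τ' :=
      (Relation.EqvGen.is_equivalence (twistStep k)).eqvGen_iff.1 (Quot.eqvGen_exact h)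
    rcases (twistCong_iff k hk τ τ').1 hc with rfl | ⟨hs, rfl⟩
    · rfl
    · obtain ⟨σ, h1 | h2⟩ := (extremeStart_iff k τ).1 hs
      · exact absurd ⟨σ, (secondForm_iff_firstForm_mul k σ τ).2 h1⟩ hτ'
      · exact absurd ⟨σ, h2⟩ hτ
  · intro x
    obtain ⟨τ, rfl⟩ := Quot.exists_rep x
    by_cases hτ : ∃ σ, secondForm k σ τ
    · obtain ⟨σ, hσ⟩ := hτ
      have h1 := (firstForm_iff_secondForm_mul k σ τ).2 hσ
      refine ⟨⟨τ * firstSwap k, fun ⟨σ', h'⟩ =>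
        not_firstForm_and_secondForm k σ σ' _ h1 h'⟩, Quot.sound ?_⟩
      refine Relation.EqvGen.symm _ _ ((twistCong_iff k hk _ _).2 (Or.inr ⟨?_, rfl⟩))
      exact (extremeStart_iff k τ).2 ⟨σ, Or.inr hσ⟩
    · exact ⟨⟨τ, hτ⟩, rfl⟩

end TwistHelpers

/-- For `k ≥ 1`, the non-singleton classes of the `k`-twist congruence on
`S_{k+2}` are exactly the pairs `{1(k+2)(σ₁+1)⋯(σ_k+1), (k+2)1(σ₁+1)⋯(σ_k+1)}` for
`σ ∈ S_k`; consequently the number of classes is `(k+2)! - k!`. -/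
theorem twist_congruence_classes_of_S_k_plus_two (k : ℕ) (hk : 1 ≤ k) :
    (∀ τ τ' : Equiv.Perm (Fin (k + 2)), τ ≠ τ' →
      (twistCong k τ τ' ↔ ∃ σ : Equiv.Perm (Fin k),
        (firstForm k σ τ ∧ secondForm k σ τ') ∨ (secondForm k σ τ ∧ firstForm k σ τ'))) ∧
    Nat.card (Quot (twistCong k (n := k + 2))) = (k + 2).factorial - k.factorial := by
  refine ⟨fun τ τ' hne => ?_, ?_⟩
  · rw [twistCong_iff k hk]
    constructor
    · rintro (h | ⟨hs, rfl⟩)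
      · exact absurd h hne
      · obtain ⟨σ, h | h⟩ := (extremeStart_iff k τ).1 hs
        · exact ⟨σ, Or.inl ⟨h, (secondForm_iff_firstForm_mul k σ τ).2 h⟩⟩
        · exact ⟨σ, Or.inr ⟨h, (firstForm_iff_secondForm_mul k σ τ).2 h⟩⟩
    · rintro ⟨σ, ⟨h, h'⟩ | ⟨h, h'⟩⟩
      · exact Or.inr ⟨(extremeStart_iff k τ).2 ⟨σ, Or.inl h⟩,
          secondForm_right_unique k σ _ _ h' ((secondForm_iff_firstForm_mul k σ τ).2 h)⟩
      · refine Or.inr ⟨(extremeStart_iff k τ).2 ⟨σ, Or.inr h⟩, ?_⟩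
        have := secondForm_right_unique k σ _ _ h ((secondForm_iff_firstForm_mul k σ τ').2 h')
        rw [this, mul_firstSwap_mul_firstSwap]
  · classical
    rw [card_quot_eq k hk, Nat.card_eq_fintype_card, Fintype.card_subtype_compl,
      ← Nat.card_eq_fintype_card, ← Nat.card_eq_fintype_card, card_secondForm, Nat.card_perm,
      Nat.card_fin]
end

section
/- For all integers k ≥ 1, n ≥ 1 and all permutations τ, τ' ∈ S_n, one has τ ≈ᵏ τ' if and only if for every pair 1 ≤ i < j ≤ n with j − i ≤ k, the equivalence τ⁻¹(i) < τ⁻¹(j) ⟺ τ'⁻¹(i) < τ'⁻¹(j) holds (i.e. τ and τ' induce the same relative order on every pair of values at distance at most k). -/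
/-!
Both directions compare positions of values, i.e. the inverse permutations.

A step exchanges two adjacent positions, so it changes the relative order of only one pair of
values, and these are more than `k` apart; hence congruent permutations agree on close pairs
(`recoilStep_same_order`).

Conversely, if `τ ≠ τ'` then `π = τ'⁻¹ τ` is not increasing, so it has a descent at some adjacent
positions `p, p + 1`. The values `τ p` and `τ (p + 1)` are ordered differently by `τ` and `τ'`, so
they are more than `k` apart and may be exchanged. This sorts the descent of `π`, which makes `π`
lexicographically smaller (`Pi.lex_desc`); induction on the lexicographic order finishes the proof.
-/

/-- One rewriting step of the `k`-recoil congruence: exchange two adjacent entries of the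
one-line notation (positions `p` and `q = p+1`) whose values differ by more than `k`. -/
def recoilStep (k : ℕ) {n : ℕ} (τ τ' : Equiv.Perm (Fin n)) : Prop :=
  ∃ p q : Fin n, (q : ℕ) = (p : ℕ) + 1 ∧ τ' = τ * Equiv.swap p q ∧
    min (τ p : ℕ) (τ q : ℕ) + k < max (τ p : ℕ) (τ q : ℕ)

/-- The `k`-recoil congruence `≈ᵏ` on permutations of `Fin n`. -/
def recoilCong (k : ℕ) {n : ℕ} : Equiv.Perm (Fin n) → Equiv.Perm (Fin n) → Prop :=
  Relation.EqvGen (recoilStep k)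

theorem recoilStep_same_order {k n : ℕ} {τ τ' : Equiv.Perm (Fin n)} (h : recoilStep k τ τ')
    (i j : Fin n) (hij : i < j) (hk : (j : ℕ) ≤ (i : ℕ) + k) :
    τ.symm i < τ.symm j ↔ τ'.symm i < τ'.symm j := by
  obtain ⟨p, q, hpq, rfl, hgap⟩ := h
  have hsymm : ∀ x, (τ * Equiv.swap p q).symm x = Equiv.swap p q (τ.symm x) := fun _ => rfl
  rw [hsymm, hsymm]
  obtain ⟨a, rfl⟩ := τ.surjective i
  obtain ⟨b, rfl⟩ := τ.surjective j
  simp only [Equiv.symm_apply_apply]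
  have hne : a ≠ b := fun e => by simp [e] at hij
  have h1 : ¬(a = p ∧ b = q) := by
    rintro ⟨rfl, rfl⟩
    rw [Fin.lt_def] at hij
    omega
  have h2 : ¬(a = q ∧ b = p) := by
    rintro ⟨rfl, rfl⟩
    rw [Fin.lt_def] at hij
    omega
  simp only [Equiv.swap_apply_def]
  split_ifs <;> simp only [Fin.ext_iff, Fin.lt_def, ne_eq] at * <;> omega

/-- A permutation of `Fin n` without descents at adjacent positions is the identity. -/
theorem eq_one_of_no_adjacent_descent {n : ℕ} (π : Equiv.Perm (Fin n))
    (h : ∀ p q : Fin n, (q : ℕ) = (p : ℕ) + 1 → ¬ π q < π p) : π = 1 := by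
  cases n with
  | zero => exact Subsingleton.elim _ _
  | succ m =>
    have hmono : StrictMono π := by
      rw [Fin.strictMono_iff_lt_succ]
      intro i
      refine lt_of_le_of_ne (not_lt.mp (h i.castSucc i.succ (by simp))) fun e => ?_
      exact (Fin.castSucc_lt_succ (i := i)).ne (π.injective e)
    have huniq := (StrictMono.range_inj hmono strictMono_id).mp
      (by rw [π.surjective.range_eq, Set.range_id])
    exact Equiv.ext fun x => congrFun huniq x

/-- Agreement on close pairs implies congruence. The parameter `f` is the permutation `τ'⁻¹ τ` in
the lexicographic order, the quantity on which the induction runs. -/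
theorem recoilCong_of_same_order {k n : ℕ} (τ' : Equiv.Perm (Fin n)) (f : Lex (Fin n → Fin n)) :
    ∀ τ : Equiv.Perm (Fin n), toLex (fun x => τ'.symm (τ x)) = f →
      (∀ i j : Fin n, i < j → (j : ℕ) ≤ (i : ℕ) + k →
        (τ.symm i < τ.symm j ↔ τ'.symm i < τ'.symm j)) → recoilCong k τ τ' := by
  induction f using WellFoundedLT.induction with
  | ind f ih =>
    intro τ hf hτ
    by_cases hdesc : ∃ p q : Fin n, (q : ℕ) = (p : ℕ) + 1 ∧ τ'.symm (τ q) < τ'.symm (τ p)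
    · obtain ⟨p, q, hpq, hlt⟩ := hdesc
      have hpq' : p < q := by rw [Fin.lt_def]; omega
      have hstep : recoilStep k τ (τ * Equiv.swap p q) := by
        refine ⟨p, q, hpq, rfl, ?_⟩
        by_contra hgap
        rcases lt_trichotomy (τ p) (τ q) with hv | hv | hv
        · have := hτ _ _ hv (by rw [Fin.lt_def] at hv; omega)
          simp only [Equiv.symm_apply_apply] at this
          exact lt_asymm hlt (this.mp hpq')
        · exact hpq'.ne (τ.injective hv)
        · have := hτ _ _ hv (by rw [Fin.lt_def] at hv; omega)
          simp only [Equiv.symm_apply_apply] at this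
          exact lt_asymm hpq' (this.mpr hlt)
      refine .trans _ _ _ (.rel _ _ hstep) (ih _ ?_ _ rfl fun i j hij hk => ?_)
      · rw [← hf]
        exact Pi.lex_desc (f := fun x => τ'.symm (τ x)) hpq'.le hlt
      · exact (recoilStep_same_order hstep i j hij hk).symm.trans (hτ i j hij hk)
    · push Not at hdesc
      have hone : τ'⁻¹ * τ = 1 :=
        eq_one_of_no_adjacent_descent _ fun p q hpq => not_lt.mpr (hdesc p q hpq)
      rw [inv_mul_eq_one.mp hone]
      exact .refl _

/-- For `k ≥ 1` and `n ≥ 1`, two permutations are `k`-recoil congruent if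
and only if they induce the same relative order on every pair of values at distance at
most `k`. -/
theorem recoil_congruence_iff_same_relative_order
    (k n : ℕ) (hk : 1 ≤ k) (hn : 1 ≤ n) (τ τ' : Equiv.Perm (Fin n)) :
    recoilCong k τ τ' ↔
      ∀ i j : Fin n, i < j → (j : ℕ) ≤ (i : ℕ) + k →
        (τ.symm i < τ.symm j ↔ τ'.symm i < τ'.symm j) := by
  refine ⟨fun h => ?_, recoilCong_of_same_order τ' _ τ rfl⟩
  induction h with
  | rel _ _ h => exact recoilStep_same_order h
  | refl _ => exact fun _ _ _ _ => Iff.rfl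
  | symm _ _ _ ih => exact fun i j hij hk => (ih i j hij hk).symm
  | trans _ _ _ _ _ ih₁ ih₂ => exact fun i j hij hk => (ih₁ i j hij hk).trans (ih₂ i j hij hk)
end

section
/- For all integers k ≥ 1 and n ≥ 1, every equivalence class of the k-recoil congruence ≈ᵏ on S_n is an interval of the weak order: it has a weak-order minimum μ and a weak-order maximum ω, and it consists precisely of all permutations σ with μ ≤ σ ≤ ω in the weak order. -/
/-- `σ` and `τ` order any two values differing by at most `k` in the same way. -/
def LocallyEq (k : ℕ) {n : ℕ} (σ τ : Equiv.Perm (Fin n)) : Prop :=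
  ∀ i j : Fin n, (i : ℕ) ≤ j + k → (j : ℕ) ≤ i + k →
    (σ.symm i < σ.symm j ↔ τ.symm i < τ.symm j)

/-- The value `i` stands before the value `j` in `σ`, and they differ by at most `k`. -/
def CloseBefore (k : ℕ) {n : ℕ} (σ : Equiv.Perm (Fin n)) (i j : Fin n) : Prop :=
  σ.symm i < σ.symm j ∧ (i : ℕ) ≤ j + k ∧ (j : ℕ) ≤ i + k

/-- The transitive closure of `CloseBefore`: the relation `◁` of the proof idea. -/
def Chain (k : ℕ) {n : ℕ} (σ : Equiv.Perm (Fin n)) : Fin n → Fin n → Prop :=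
  Relation.TransGen (CloseBefore k σ)

/-- Every adjacent descent of `μ` is between values that differ by at most `k`, so no rewriting
step on `μ` removes a coinversion. -/
def IsSorted (k : ℕ) {n : ℕ} (μ : Equiv.Perm (Fin n)) : Prop :=
  ∀ p q : Fin n, (q : ℕ) = p + 1 → μ q < μ p → (μ p : ℕ) ≤ μ q + k

variable {k n : ℕ} {σ τ μ : Equiv.Perm (Fin n)}

lemma LocallyEq.symm (h : LocallyEq k σ τ) : LocallyEq k τ σ :=
  fun i j h1 h2 => (h i j h1 h2).symm

lemma LocallyEq.trans (h : LocallyEq k σ τ) (h' : LocallyEq k τ μ) : LocallyEq k σ μ :=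
  fun i j h1 h2 => (h i j h1 h2).trans (h' i j h1 h2)

lemma recoilStep.locallyEq (h : recoilStep k σ τ) : LocallyEq k σ τ := by
  obtain ⟨p, q, hpq, rfl, hk⟩ := h
  intro i j h1 h2
  obtain ⟨a, rfl⟩ := σ.surjective i
  obtain ⟨b, rfl⟩ := σ.surjective j
  have e : ∀ x, (σ * Equiv.swap p q).symm (σ x) = Equiv.swap p q x := by
    intro x
    rw [Equiv.symm_apply_eq]
    simp
  rw [e, e, Equiv.symm_apply_apply, Equiv.symm_apply_apply]
  -- An adjacent transposition reverses only the order of the two positions `p` and `q`.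
  have hab : ¬(a = p ∧ b = q) := by
    rintro ⟨rfl, rfl⟩
    omega
  have hba : ¬(a = q ∧ b = p) := by
    rintro ⟨rfl, rfl⟩
    omega
  simp only [Equiv.swap_apply_def]
  split_ifs <;> omega

lemma recoilCong.locallyEq (h : recoilCong k σ τ) : LocallyEq k σ τ := by
  induction h with
  | rel _ _ h => exact h.locallyEq
  | refl => exact fun _ _ _ _ => Iff.rfl
  | symm _ _ _ ih => exact ih.symm
  | trans _ _ _ _ _ ih1 ih2 => exact ih1.trans ih2

lemma Chain.before {i j : Fin n} (h : Chain k σ i j) : σ.symm i < σ.symm j := by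
  induction h with
  | single h => exact h.1
  | tail _ h ih => exact ih.trans h.1

lemma Chain.of_locallyEq (hst : LocallyEq k σ τ) {i j : Fin n} (h : Chain k σ i j) :
    Chain k τ i j :=
  have hle : CloseBefore k σ ≤ CloseBefore k τ :=
    fun _ _ hab => ⟨(hst _ _ hab.2.1 hab.2.2).1 hab.1, hab.2⟩
  Relation.TransGen.mono hle i j h

/-- A chain descending from `l` to `i` either visits a value `j` strictly between them or jumps over
it; in the latter case both ends of the jump are close to `j`, hence comparable with it. -/
lemma chain_split {l i : Fin n} (h : Chain k σ l i) :
    ∀ j, i < j → j < l → Chain k σ l j ∨ Chain k σ j i := by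
  have close : ∀ l c j : Fin n, CloseBefore k σ l c → c < j → j < l →
      Chain k σ l j ∨ Chain k σ j c := by
    intro l c j hlc hcj hjl
    have h2 := hlc.2
    rcases lt_trichotomy (σ.symm l) (σ.symm j) with hlt | heq | hgt
    · exact Or.inl (.single ⟨hlt, by omega, by omega⟩)
    · exact absurd (σ.symm.injective heq) hjl.ne'
    · exact Or.inr (.head ⟨hgt, by omega, by omega⟩ (.single hlc))
  induction h using Relation.TransGen.head_induction_on with
  | single h => exact fun j => close _ _ j h
  | @head l c hlc hci ih =>
    intro j hij hjl
    rcases lt_trichotomy j c with hlt | rfl | hgt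
    · exact (ih j hij hlt).imp (.head hlc) id
    · exact Or.inr hci
    · exact (close l c j hlc hgt hjl).imp id fun hjc => hjc.trans hci

lemma IsSorted.chain_of_coinversion (hμ : IsSorted k μ) (i j : Fin n) (hij : i < j)
    (hinv : μ.symm j < μ.symm i) : Chain k μ j i := by
  induction hd : (μ.symm i : ℕ) - μ.symm j using Nat.strong_induction_on generalizing i j with
  | _ d ih =>
    subst hd
    by_cases hadj : (μ.symm i : ℕ) = μ.symm j + 1
    · have := hμ (μ.symm j) (μ.symm i) hadj (by simpa using hij)
      simp only [Equiv.apply_symm_apply] at this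
      exact .single ⟨hinv, this, by omega⟩
    · -- `m` is the value standing right after `j`, hence strictly between `j` and `i`.
      obtain ⟨m, hm⟩ : ∃ m, (μ.symm m : ℕ) = μ.symm j + 1 :=
        ⟨μ ⟨μ.symm j + 1, by omega⟩, by simp⟩
      have hjm : μ.symm j < μ.symm m := by omega
      have hmi : μ.symm m < μ.symm i := by omega
      rcases lt_trichotomy m i with h1 | rfl | h1
      · have hc := ih _ (by omega) m j (h1.trans hij) hjm rfl
        exact (chain_split hc i h1 hij).resolve_right fun h => h.before.not_gt hmi
      · exact absurd hmi (lt_irrefl _)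
      · have hc := ih _ (by omega) i m h1 hmi rfl
        rcases lt_trichotomy m j with h2 | rfl | h2
        · exact (ih _ (by omega) m j h2 hjm rfl).trans hc
        · exact absurd hjm (lt_irrefl _)
        · exact (chain_split hc j hij h2).resolve_left fun h => h.before.not_gt hjm

lemma IsSorted.weakLE (hμ : IsSorted k μ) (h : LocallyEq k μ σ) : weakLE μ σ :=
  fun i j hij hinv => ((hμ.chain_of_coinversion i j hij hinv).of_locallyEq h).before

lemma weakLE_antisymm (h1 : weakLE σ τ) (h2 : weakLE τ σ) : σ = τ := by
  have mono : StrictMono (σ.symm ∘ τ) := by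
    intro a b hab
    simp only [Function.comp_apply]
    rcases lt_trichotomy (τ a) (τ b) with h | h | h
    · by_contra hc
      have hne : σ.symm (τ b) ≠ σ.symm (τ a) := fun e => h.ne' (σ.symm.injective e)
      have := h1 _ _ h (lt_of_le_of_ne (not_lt.1 hc) hne)
      simp only [Equiv.symm_apply_apply] at this
      exact this.not_gt hab
    · exact absurd (τ.injective h) hab.ne
    · exact h2 _ _ h (by simpa using hab)
  have hid : σ.symm ∘ τ = id :=
    (StrictMono.range_inj mono strictMono_id).1 (by
      rw [Set.range_id, (σ.symm.surjective.comp τ.surjective).range_eq])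
  ext1 x
  exact (σ.symm_apply_eq.1 (congrFun hid x)).symm

lemma exists_isSorted (k : ℕ) (τ : Equiv.Perm (Fin n)) :
    ∃ μ, recoilCong k μ τ ∧ IsSorted k μ := by
  obtain ⟨μ, hμ, hmin⟩ := Set.exists_min_image {μ | recoilCong k μ τ}
    (fun μ => toLex (μ : Fin n → Fin n)) (Set.toFinite _) ⟨τ, .refl _⟩
  refine ⟨μ, hμ, fun p q hpq hlt => ?_⟩
  by_contra hc
  have hstep : recoilStep k μ (μ * Equiv.swap p q) := ⟨p, q, hpq, rfl, by omega⟩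
  refine (hmin (μ * Equiv.swap p q) (.trans _ _ _ (.symm _ _ (.rel _ _ hstep)) hμ)).not_gt ?_
  refine ⟨p, fun j hj => ?_, by simpa using hlt⟩
  have : Equiv.swap p q j = j :=
    Equiv.swap_apply_of_ne_of_ne hj.ne (by rintro rfl; omega)
  simp [this]

/-- The order of close values determines the congruence class, since it determines the sorted
representative. -/
lemma LocallyEq.recoilCong (h : LocallyEq k σ τ) : recoilCong k σ τ := by
  obtain ⟨μ, hμ, sμ⟩ := exists_isSorted k σ
  obtain ⟨ν, hν, sν⟩ := exists_isSorted k τ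
  have hloc : LocallyEq k μ ν := (hμ.locallyEq.trans h).trans hν.locallyEq.symm
  obtain rfl : μ = ν := weakLE_antisymm (sμ.weakLE hloc) (sν.weakLE hloc.symm)
  exact .trans _ _ _ (.symm _ _ hμ) hν

lemma symm_revPerm_mul (σ : Equiv.Perm (Fin n)) (i : Fin n) :
    (Fin.revPerm * σ).symm i = σ.symm i.rev := by
  rw [Equiv.symm_apply_eq]
  simp

lemma LocallyEq.revPerm_mul (h : LocallyEq k σ τ) :
    LocallyEq k (Fin.revPerm * σ) (Fin.revPerm * τ) := by
  intro i j h1 h2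
  simp only [symm_revPerm_mul]
  apply h <;> simp only [Fin.val_rev] <;> omega

lemma revPerm_mul_revPerm_mul (σ : Equiv.Perm (Fin n)) : Fin.revPerm * (Fin.revPerm * σ) = σ := by
  ext1 x
  simp

lemma weakLE_of_revPerm_mul (h : weakLE (Fin.revPerm * σ) (Fin.revPerm * τ)) : weakLE τ σ := by
  intro i j hij hinv
  by_contra hc
  have hne : σ.symm i ≠ σ.symm j := fun e => hij.ne (σ.symm.injective e)
  have := h j.rev i.rev (Fin.rev_lt_rev.2 hij)
    (by simpa [symm_revPerm_mul] using lt_of_le_of_ne (not_lt.1 hc) hne)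
  simp only [symm_revPerm_mul, Fin.rev_rev] at this
  exact this.not_gt hinv

/-- Between two permutations that order close values alike, the weak order leaves no freedom for
the order of close values. -/
lemma locallyEq_of_between {ω : Equiv.Perm (Fin n)} (h : LocallyEq k μ ω) (h1 : weakLE μ σ)
    (h2 : weakLE σ ω) : LocallyEq k σ μ := by
  have key : ∀ i j : Fin n, i < j → (j : ℕ) ≤ i + k →
      (σ.symm j < σ.symm i ↔ μ.symm j < μ.symm i) := fun i j hij hjk =>
    ⟨fun hs => (h j i hjk (by omega)).2 (h2 i j hij hs), h1 i j hij⟩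
  intro i j hi hj
  rcases lt_trichotomy i j with hlt | rfl | hgt
  · have hs : σ.symm i ≠ σ.symm j := fun e => hlt.ne (σ.symm.injective e)
    have hm : μ.symm i ≠ μ.symm j := fun e => hlt.ne (μ.symm.injective e)
    have := key i j hlt hj
    omega
  · simp
  · exact key j i hgt hi

/-- For `k ≥ 1` and `n ≥ 1`, every equivalence class of the `k`-recoil
congruence on `S_n` is an interval of the weak order: it has a weak-order minimum `μ` and a
weak-order maximum `ω`, and consists precisely of the permutations `σ` with `μ ≤ σ ≤ ω`. -/
theorem recoil_classes_are_weak_order_intervals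
    (k n : ℕ) (hk : 1 ≤ k) (hn : 1 ≤ n) (τ : Equiv.Perm (Fin n)) :
    ∃ μ ω : Equiv.Perm (Fin n), recoilCong k μ τ ∧ recoilCong k ω τ ∧
      ∀ σ : Equiv.Perm (Fin n), (recoilCong k σ τ ↔ (weakLE μ σ ∧ weakLE σ ω)) := by
  obtain ⟨μ, hμ, sμ⟩ := exists_isSorted k τ
  obtain ⟨ν, hν, sν⟩ := exists_isSorted k (Fin.revPerm * τ)
  have hω : LocallyEq k (Fin.revPerm * ν) τ := by
    simpa only [revPerm_mul_revPerm_mul] using hν.locallyEq.revPerm_mul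
  refine ⟨μ, Fin.revPerm * ν, hμ, hω.recoilCong, fun σ => ⟨fun h => ⟨?_, ?_⟩, fun h => ?_⟩⟩
  · exact sμ.weakLE (hμ.locallyEq.trans h.locallyEq.symm)
  · apply weakLE_of_revPerm_mul
    rw [revPerm_mul_revPerm_mul]
    exact sν.weakLE (hν.locallyEq.trans h.locallyEq.symm.revPerm_mul)
  · exact ((locallyEq_of_between (hμ.locallyEq.trans hω.symm) h.1 h.2).trans
      hμ.locallyEq).recoilCong
end

section
/- For all integers k ≥ 1 and n ≥ 1, the number of equivalence classes of the k-recoil congruence ≈ᵏ on S_n equals n! if n ≤ k, and equals k!·(k+1)^{n−k} if n ≥ k. -/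
open Finset

/-- The letters `u < v` at distance at most `k` from `v`. -/
def recoilWindow (k : ℕ) {n : ℕ} (v : Fin n) : Finset (Fin n) :=
  {u | u < v ∧ (v : ℕ) ≤ (u : ℕ) + k}

/-- The truncated Lehmer code: the number of letters of the window of `v` to the left of `v`. -/
def recoilCode (k : ℕ) {n : ℕ} (τ : Equiv.Perm (Fin n)) (v : Fin n) : ℕ :=
  #{u ∈ recoilWindow k v | τ.symm u < τ.symm v}

lemma mem_recoilWindow {k n : ℕ} {u v : Fin n} :
    u ∈ recoilWindow k v ↔ u < v ∧ (v : ℕ) ≤ (u : ℕ) + k := by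
  simp [recoilWindow]

lemma card_recoilWindow (k : ℕ) {n : ℕ} (v : Fin n) : #(recoilWindow k v) = min k v := by
  have h : (recoilWindow k v).map Fin.valEmbedding = Finset.Ico ((v : ℕ) - k) v := by
    ext x
    simp only [mem_map, mem_recoilWindow, Fin.valEmbedding_apply, mem_Ico, Fin.lt_def]
    constructor
    · rintro ⟨a, ha, rfl⟩
      omega
    · intro hx
      exact ⟨⟨x, by omega⟩, by simp; omega, rfl⟩
  rw [← card_map Fin.valEmbedding, h, Nat.card_Ico]
  omega

lemma recoilCode_le (k : ℕ) {n : ℕ} (τ : Equiv.Perm (Fin n)) (v : Fin n) :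
    recoilCode k τ v ≤ min k v :=
  (card_filter_le _ _).trans (card_recoilWindow k v).le

/-! ### Invariance of the code -/

lemma recoilCode_eq_of_step {k n : ℕ} {τ τ' : Equiv.Perm (Fin n)} (h : recoilStep k τ τ') :
    recoilCode k τ = recoilCode k τ' := by
  obtain ⟨p, q, hpq, rfl, hk⟩ := h
  funext v
  unfold recoilCode
  congr 1
  refine filter_congr fun u hu => ?_
  rw [mem_recoilWindow] at hu
  obtain ⟨a, rfl⟩ := τ.surjective u
  obtain ⟨b, rfl⟩ := τ.surjective v
  have hs : ∀ x, (τ * Equiv.swap p q).symm (τ x) = Equiv.swap p q x := by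
    intro x
    rw [Equiv.symm_apply_eq]
    simp
  simp only [hs, Equiv.symm_apply_apply, Equiv.swap_apply_def]
  have h1 : ¬ (a = p ∧ b = q) := by
    rintro ⟨rfl, rfl⟩
    have := hu.1
    rw [Fin.lt_def] at this
    omega
  have h2 : ¬ (a = q ∧ b = p) := by
    rintro ⟨rfl, rfl⟩
    have := hu.1
    rw [Fin.lt_def] at this
    omega
  simp only [Fin.ext_iff, Fin.lt_def] at *
  split_ifs <;> omega

lemma recoilCode_eq_of_cong {k n : ℕ} {τ τ' : Equiv.Perm (Fin n)} (h : recoilCong k τ τ') :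
    recoilCode k τ = recoilCode k τ' := by
  induction h with
  | rel _ _ h => exact recoilCode_eq_of_step h
  | refl _ => rfl
  | symm _ _ _ ih => exact ih.symm
  | trans _ _ _ _ _ ih1 ih2 => exact ih1.trans ih2

/-! ### The code separates classes -/

/-- If `f` and `g` order `W` in the same way, the sets of elements of `W` below given thresholds
are initial segments of the same chain, hence equal as soon as they are equinumerous. -/
lemma filter_lt_eq_of_card_eq {α β : Type*} [LinearOrder β] (W : Finset α)
    (f g : α → β) (x y : β) (hfg : ∀ a ∈ W, ∀ b ∈ W, f a < f b ↔ g a < g b)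
    (hc : #{u ∈ W | f u < x} = #{u ∈ W | g u < y}) :
    {u ∈ W | f u < x} = {u ∈ W | g u < y} := by
  by_cases h : {u ∈ W | f u < x} ⊆ {u ∈ W | g u < y}
  · exact eq_of_subset_of_card_le h hc.ge
  · obtain ⟨a, ha, hb⟩ := not_subset.1 h
    simp only [mem_filter, not_and, not_lt] at ha hb
    refine (eq_of_subset_of_card_le (fun b hb' => ?_) hc.le).symm
    simp only [mem_filter] at hb' ⊢
    exact ⟨hb'.1, ((hfg b hb'.1 a ha.1).2 (hb'.2.trans_le (hb ha.1))).trans ha.2⟩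

lemma pos_lt_iff_of_code_eq {k n : ℕ} {τ σ : Equiv.Perm (Fin n)}
    (h : recoilCode k τ = recoilCode k σ) (v : Fin n) :
    ∀ u ∈ recoilWindow k v, τ.symm u < τ.symm v ↔ σ.symm u < σ.symm v := by
  induction v using WellFoundedLT.induction with
  | ind v ih =>
    have hW : ∀ a ∈ recoilWindow k v, ∀ b ∈ recoilWindow k v,
        τ.symm a < τ.symm b ↔ σ.symm a < σ.symm b := by
      intro a ha b hb
      rw [mem_recoilWindow, Fin.lt_def] at ha hb
      rcases lt_trichotomy a b with hab | rfl | hab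
      · exact ih b hb.1 a (mem_recoilWindow.2 ⟨hab, by omega⟩)
      · simp
      · have := ih a ha.1 b (mem_recoilWindow.2 ⟨hab, by omega⟩)
        have h1 : τ.symm a ≠ τ.symm b := τ.symm.injective.ne hab.ne'
        have h2 : σ.symm a ≠ σ.symm b := σ.symm.injective.ne hab.ne'
        rw [← not_iff_not, not_lt, not_lt, h1.symm.le_iff_lt, h2.symm.le_iff_lt, this]
    have := filter_lt_eq_of_card_eq _ _ _ _ _ hW (congrFun h v)
    intro u hu
    simpa [hu] using Finset.ext_iff.1 this u

lemma sum_mul_lt_sum_mul_swap {n : ℕ} (f : Fin n → Fin n) {p q : Fin n} (hpq : p < q)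
    (hf : f q < f p) :
    ∑ i : Fin n, ((i : ℕ) : ℤ) * (f i : ℕ) < ∑ i : Fin n, ((i : ℕ) : ℤ) * (f (Equiv.swap p q i) : ℕ) := by
  rw [← sub_pos, ← sum_sub_distrib, ← sum_subset (subset_univ {p, q})]
  · rw [sum_pair hpq.ne]
    simp only [Equiv.swap_apply_left, Equiv.swap_apply_right]
    rw [Fin.lt_def] at hpq hf
    have h1 : (0 : ℤ) < (q : ℕ) - (p : ℕ) := by omega
    have h2 : (0 : ℤ) < (f p : ℕ) - (f q : ℕ) := by omega
    nlinarith [mul_pos h1 h2]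
  · intro x _ hx
    simp only [mem_insert, mem_singleton, not_or] at hx
    rw [Equiv.swap_apply_of_ne_of_ne hx.1 hx.2, sub_self]

lemma exists_descent {n : ℕ} {ρ : Equiv.Perm (Fin n)} (hρ : ρ ≠ 1) :
    ∃ p q : Fin n, (q : ℕ) = (p : ℕ) + 1 ∧ ρ q < ρ p := by
  by_contra! h
  apply hρ
  cases n with
  | zero => exact Subsingleton.elim _ _
  | succ n =>
    have hm : Monotone ρ := Fin.monotone_iff_le_succ.2 fun i => h _ _ (by simp)
    exact (Equiv.Perm.monotone_iff ρ).1 hm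

lemma recoilCong_of_code_eq {k n : ℕ} {τ σ : Equiv.Perm (Fin n)}
    (h : recoilCode k τ = recoilCode k σ) : recoilCong k τ σ := by
  obtain ⟨τ', hτ', hmax⟩ := Set.exists_max_image {τ' | recoilCong k τ τ'}
    (fun τ' => ∑ i : Fin n, ((i : ℕ) : ℤ) * (σ.symm (τ' i) : ℕ)) (Set.toFinite _) ⟨τ, Relation.EqvGen.refl _⟩
  rw [Set.mem_ofPred_eq] at hτ'
  by_cases hρ : σ⁻¹ * τ' = 1
  · rwa [inv_mul_eq_one.1 hρ]
  exfalso
  obtain ⟨p, q, hpq, hlt⟩ := exists_descent hρ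
  have hlt' : σ.symm (τ' q) < σ.symm (τ' p) := hlt
  have hpq' : p < q := by
    rw [Fin.lt_def]
    omega
  have hcode : recoilCode k τ' = recoilCode k σ := (recoilCode_eq_of_cong hτ').symm.trans h
  have h1 : τ' p ∉ recoilWindow k (τ' q) := fun hm => by
    have := (pos_lt_iff_of_code_eq hcode _ _ hm).1 (by simpa using hpq')
    exact lt_asymm this hlt'
  have h2 : τ' q ∉ recoilWindow k (τ' p) := fun hm => by
    have := (pos_lt_iff_of_code_eq hcode _ _ hm).2 hlt'
    simp only [Equiv.symm_apply_apply] at this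
    exact lt_asymm this hpq'
  have hne : (τ' p : ℕ) ≠ τ' q := Fin.val_ne_of_ne (τ'.injective.ne hpq'.ne)
  have hstep : recoilStep k τ' (τ' * Equiv.swap p q) := by
    refine ⟨p, q, hpq, rfl, ?_⟩
    rw [mem_recoilWindow, Fin.lt_def] at h1 h2
    omega
  have := hmax _ (hτ'.trans _ _ _ (.rel _ _ hstep))
  exact absurd (sum_mul_lt_sum_mul_swap (fun i => σ.symm (τ' i)) hpq' hlt') (not_lt.2 this)

/-! ### Every code occurs -/

lemma exists_initial_segment (T : Finset ℚ) (c : ℕ) (hc : c ≤ #T) :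
    ∃ A ⊆ T, #A = c ∧ ∀ a ∈ A, ∀ t ∈ T, t ≤ a → t ∈ A := by
  induction c with
  | zero => exact ⟨∅, by simp⟩
  | succ c ih =>
    obtain ⟨A, hAT, hA, hlow⟩ := ih (by omega)
    have hne : (T \ A).Nonempty := by
      rw [← card_pos, card_sdiff_of_subset hAT]
      omega
    have hmem := min'_mem _ hne
    have hmin : ∀ t ∈ T, t ∉ A → (T \ A).min' hne ≤ t :=
      fun t ht htA => min'_le _ _ (by simp [ht, htA])
    generalize (T \ A).min' hne = m at hmem hmin
    rw [mem_sdiff] at hmem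
    refine ⟨insert m A, insert_subset hmem.1 hAT, by rw [card_insert_of_notMem hmem.2, hA], ?_⟩
    intro a ha t ht hta
    rw [mem_insert] at ha ⊢
    by_contra! hcon
    rcases ha with rfl | ha
    · exact hcon.1 (le_antisymm hta (hmin t ht hcon.2))
    · exact hcon.2 (hlow a ha t ht hta)

/-- A new point can be placed at any prescribed rank with respect to `T`, avoiding `S ⊇ T`. -/
lemma exists_rank_eq (S T : Finset ℚ) (hTS : T ⊆ S) (c : ℕ) (hc : c ≤ #T) :
    ∃ x, x ∉ S ∧ #{t ∈ T | t < x} = c := by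
  obtain ⟨A, hAT, hA, hlow⟩ := exists_initial_segment T c hc
  obtain ⟨x, hx1, hx2⟩ := Order.exists_between_finsets
    {s ∈ S | ∃ a ∈ A, s ≤ a} {s ∈ S | ¬ ∃ a ∈ A, s ≤ a} (by
      intro s hs t ht
      simp only [mem_filter, not_exists, not_and, not_le] at hs ht
      obtain ⟨_, a, ha, hsa⟩ := hs
      exact hsa.trans_lt (ht.2 a ha))
  refine ⟨x, fun hxS => ?_, ?_⟩
  · by_cases h : ∃ a ∈ A, x ≤ a
    · exact lt_irrefl _ (hx1 x (mem_filter.2 ⟨hxS, h⟩))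
    · exact lt_irrefl _ (hx2 x (mem_filter.2 ⟨hxS, h⟩))
  · rw [← hA]
    congr 1
    ext t
    rw [mem_filter]
    constructor
    · rintro ⟨ht, htx⟩
      by_contra htA
      refine lt_asymm htx (hx2 t (mem_filter.2 ⟨hTS ht, ?_⟩))
      rintro ⟨a, ha, hta⟩
      exact htA (hlow a ha t ht hta)
    · intro ht
      exact ⟨hAT ht, hx1 t (mem_filter.2 ⟨hTS (hAT ht), t, ht, le_rfl⟩)⟩

/-- Placement of the first `m` letters at distinct rational points with prescribed code. -/
lemma exists_placement (k : ℕ) {n : ℕ} (c : Fin n → ℕ) (hc : ∀ v, c v ≤ min k v) (m : ℕ)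
    (hm : m ≤ n) : ∃ f : Fin n → ℚ, Set.InjOn f {v | (v : ℕ) < m} ∧
      ∀ v : Fin n, (v : ℕ) < m → #{u ∈ recoilWindow k v | f u < f v} = c v := by
  induction m with
  | zero => exact ⟨fun _ => 0, by simp [Set.InjOn], by simp⟩
  | succ m ih =>
    obtain ⟨f, hinj, hf⟩ := ih (by omega)
    let w : Fin n := ⟨m, hm⟩
    have hsub : recoilWindow k w ⊆ ({v | (v : ℕ) < m} : Finset (Fin n)) := by
      intro u hu
      rw [mem_recoilWindow, Fin.lt_def] at hu
      exact mem_filter.2 ⟨mem_univ _, hu.1⟩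
    have hinjW : Set.InjOn f (recoilWindow k w) :=
      hinj.mono fun u hu => by simpa using hsub hu
    obtain ⟨x, hxS, hx⟩ := exists_rank_eq (image f ({v | (v : ℕ) < m} : Finset (Fin n)))
      (image f (recoilWindow k w)) (image_subset_image hsub) (c w)
      (by rw [card_image_of_injOn hinjW, card_recoilWindow]; exact hc w)
    have hx' : ∀ v : Fin n, (v : ℕ) < m → f v ≠ x := by
      intro v hv hvx
      exact hxS (mem_image.2 ⟨v, by simpa using hv, hvx⟩)
    have hup : ∀ v : Fin n, (v : ℕ) < m → Function.update f w x v = f v := by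
      intro v hv
      apply Function.update_of_ne
      rintro rfl
      exact lt_irrefl _ hv
    have hcase : ∀ v : Fin n, (v : ℕ) < m + 1 → (v : ℕ) < m ∨ v = w := by
      intro v hv
      rw [Fin.ext_iff]
      change _ ∨ (v : ℕ) = m
      omega
    refine ⟨Function.update f w x, ?_, ?_⟩
    · intro a ha b hb hab
      rcases hcase a ha with ha | rfl <;> rcases hcase b hb with hb | rfl
      · rw [hup a ha, hup b hb] at hab
        exact hinj ha hb hab
      · rw [hup a ha, Function.update_self] at hab
        exact absurd hab (hx' a ha)
      · rw [hup b hb, Function.update_self] at hab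
        exact absurd hab.symm (hx' b hb)
      · rfl
    · intro v hv
      rcases hcase v hv with hv | rfl
      · rw [← hf v hv, hup v hv]
        congr 1
        refine filter_congr fun u hu => ?_
        rw [mem_recoilWindow, Fin.lt_def] at hu
        rw [hup u (by omega)]
      · rw [← hx, filter_image, card_image_of_injOn (hinjW.mono (filter_subset _ _)), Function.update_self]
        congr 1
        refine filter_congr fun u hu => ?_
        rw [hup u (by simpa using hsub hu)]

lemma exists_code_eq (k : ℕ) {n : ℕ} (c : Fin n → ℕ) (hc : ∀ v, c v ≤ min k v) :
    ∃ τ : Equiv.Perm (Fin n), recoilCode k τ = c := by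
  obtain ⟨f, hinj, hf⟩ := exists_placement k c hc n le_rfl
  have hinj' : Function.Injective f := fun a b hab => hinj a.2 b.2 hab
  have hmono : StrictMono (f ∘ Tuple.sort f) :=
    (Tuple.monotone_sort f).strictMono_of_injective (hinj'.comp (Tuple.sort f).injective)
  refine ⟨Tuple.sort f, funext fun v => ?_⟩
  rw [← hf v v.2]
  unfold recoilCode
  congr 1
  refine filter_congr fun u _ => ?_
  rw [← hmono.lt_iff_lt]
  simp

/-! ### Counting codes -/

lemma card_recoilClasses (k n : ℕ) :
    Nat.card (Quot (recoilCong k (n := n))) = ∏ v ∈ range n, (min k v + 1) := by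
  let F : Quot (recoilCong k (n := n)) → (v : Fin n) → Fin (min k v + 1) :=
    Quot.lift (fun τ v => ⟨recoilCode k τ v, Nat.lt_succ_of_le (recoilCode_le k τ v)⟩) (by
      intro τ τ' h
      simp only [recoilCode_eq_of_cong h])
  have hF : Function.Bijective F := by
    constructor
    · rintro ⟨τ⟩ ⟨σ⟩ h
      refine Quot.sound (recoilCong_of_code_eq (funext fun v => ?_))
      exact congrArg Fin.val (congrFun h v)
    · intro c
      obtain ⟨τ, hτ⟩ := exists_code_eq k (fun v => (c v : ℕ)) fun v => Nat.le_of_lt_succ (c v).2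
      exact ⟨Quot.mk _ τ, funext fun v => Fin.ext (congrFun hτ v)⟩
  rw [Nat.card_eq_of_bijective F hF, Nat.card_eq_fintype_card, Fintype.card_pi]
  simp only [Fintype.card_fin]
  exact Fin.prod_univ_eq_prod_range (fun v => min k v + 1) n

lemma prod_min_of_le {k n : ℕ} (h : n ≤ k) : ∏ v ∈ range n, (min k v + 1) = n.factorial := by
  rw [← prod_range_add_one_eq_factorial]
  refine prod_congr rfl fun v hv => ?_
  rw [mem_range] at hv
  rw [min_eq_right (by omega)]

/-- For `k ≥ 1` and `n ≥ 1`, the number of classes of the `k`-recoil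
congruence on `S_n` is `n!` if `n ≤ k`, and `k!·(k+1)^(n-k)` if `n ≥ k`. -/
theorem card_recoil_congruence_classes (k n : ℕ) (hk : 1 ≤ k) (hn : 1 ≤ n) :
    (n ≤ k → Nat.card (Quot (recoilCong k (n := n))) = n.factorial) ∧
    (k ≤ n → Nat.card (Quot (recoilCong k (n := n))) = k.factorial * (k + 1) ^ (n - k)) := by
  rw [card_recoilClasses]
  refine ⟨prod_min_of_le, fun h => ?_⟩
  obtain ⟨d, rfl⟩ := Nat.exists_eq_add_of_le h
  rw [prod_range_add, prod_min_of_le le_rfl]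
  simp
end

section
/- For all integers k ≥ 1 and n ≥ 1, the k-recoil congruence ≈ᵏ is a lattice congruence of the weak order on S_n: every ≈ᵏ-class has a weak-order minimum and a weak-order maximum, and whenever τ ≤ τ' in the weak order, the minimum of the ≈ᵏ-class of τ is ≤ the minimum of the ≈ᵏ-class of τ', and the maximum of the ≈ᵏ-class of τ is ≤ the maximum of the ≈ᵏ-class of τ'. -/
/-- `a > b` are values at distance at most `k`, and `a` stands before `b` in `τ`. -/
def closeStep (k : ℕ) {n : ℕ} (τ : Equiv.Perm (Fin n)) (a b : Fin n) : Prop :=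
  b < a ∧ (a : ℕ) ≤ (b : ℕ) + k ∧ τ.symm a < τ.symm b

/-- The transitive closure of `closeStep`: `a` and `b` are joined by a subword of `τ` that is
decreasing with consecutive gaps at most `k`. -/
def closeDesc (k : ℕ) {n : ℕ} (τ : Equiv.Perm (Fin n)) : Fin n → Fin n → Prop :=
  Relation.TransGen (closeStep k τ)

lemma closeDesc_coinv {k n : ℕ} {τ : Equiv.Perm (Fin n)} {a b : Fin n}
    (h : closeDesc k τ a b) : b < a ∧ τ.symm a < τ.symm b := by
  induction h with
  | single h => exact ⟨h.1, h.2.2⟩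
  | tail _ h ih => exact ⟨h.1.trans ih.1, ih.2.trans h.2.2⟩

lemma closeDesc_mono {k n : ℕ} {τ σ : Equiv.Perm (Fin n)} (h : weakLE τ σ) {a b : Fin n}
    (hd : closeDesc k τ a b) : closeDesc k σ a b :=
  Relation.TransGen.mono (fun _ _ hs => ⟨hs.1, hs.2.1, h _ _ hs.1 hs.2.2⟩) _ _ hd

lemma closeStep_congr_step {k n : ℕ} {τ σ : Equiv.Perm (Fin n)} (h : recoilStep k τ σ) :
    closeStep k τ = closeStep k σ := by
  obtain ⟨p, q, hpq, rfl, hlt⟩ := h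
  funext a b
  obtain ⟨x, rfl⟩ := τ.surjective a
  obtain ⟨y, rfl⟩ := τ.surjective b
  have hs : ∀ z, (τ * Equiv.swap p q).symm (τ z) = Equiv.swap p q z := by
    intro z
    rw [Equiv.symm_apply_eq]
    simp
  unfold closeStep
  rw [hs, hs, Equiv.symm_apply_apply, Equiv.symm_apply_apply]
  apply propext
  refine and_congr_right fun h1 => and_congr_right fun h2 => ?_
  have h3 : ¬ (x = p ∧ y = q) := by
    rintro ⟨rfl, rfl⟩
    omega
  have h4 : ¬ (x = q ∧ y = p) := by
    rintro ⟨rfl, rfl⟩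
    omega
  rw [Equiv.swap_apply_def, Equiv.swap_apply_def]
  split_ifs <;> omega

lemma closeDesc_congr {k n : ℕ} {τ σ : Equiv.Perm (Fin n)} (h : recoilCong k τ σ) :
    closeDesc k τ = closeDesc k σ := by
  have : closeStep k τ = closeStep k σ := by
    induction h with
    | rel _ _ h => exact closeStep_congr_step h
    | refl _ => rfl
    | symm _ _ _ ih => exact ih.symm
    | trans _ _ _ _ _ ih₁ ih₂ => exact ih₁.trans ih₂
  unfold closeDesc
  rw [this]

/-- A `closeDesc` chain can be cut at any intermediate value. -/
lemma closeDesc_cut {k n : ℕ} {τ : Equiv.Perm (Fin n)} {a b j : Fin n}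
    (h : closeDesc k τ a b) (hbj : b < j) (hja : j < a) :
    closeDesc k τ a j ∨ closeDesc k τ j b := by
  -- The single step `c → d` with `d < j < c`: compare the positions of `j` and `c`.
  have key : ∀ c d : Fin n, closeStep k τ c d → d < j → j < c →
      closeStep k τ c j ∨ closeStep k τ j d := by
    rintro c d ⟨_, h2, h3⟩ hd hc
    have hne : τ.symm c ≠ τ.symm j := fun e => hc.ne' (τ.symm.injective e)
    rcases lt_or_gt_of_ne hne with h | h
    · exact Or.inl ⟨hc, by omega, h⟩
    · exact Or.inr ⟨hd, by omega, h.trans h3⟩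
  induction h with
  | single h => exact (key _ _ h hbj hja).imp .single .single
  | @tail c d hac h ih =>
    rcases lt_trichotomy c j with hc | rfl | hc
    · exact (ih hc).imp_right fun hjc => hjc.tail h
    · exact Or.inl hac
    · exact (key _ _ h hbj hc).imp hac.tail .single

/-- In a permutation without adjacent descents of height more than `k`, every coinversion comes
from a `closeDesc` chain. The induction is on the distance `d` between the two positions (off by
one); with `r = p + 1`, either `τ r` lies between `τ q` and `τ p` and two chains are concatenated, or
a chain between `τ r` and one of the ends is cut at the other end. -/
lemma closeDesc_of_coinv {k n : ℕ} {τ : Equiv.Perm (Fin n)}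
    (hτ : ∀ p q : Fin n, (q : ℕ) = (p : ℕ) + 1 → (τ p : ℕ) ≤ (τ q : ℕ) + k) (d : ℕ) :
    ∀ p q : Fin n, (q : ℕ) = p + d + 1 → τ q < τ p → closeDesc k τ (τ p) (τ q) := by
  induction d using Nat.strong_induction_on with
  | _ d ih =>
    intro p q hpq hlt
    rcases Nat.eq_zero_or_pos d with rfl | hd
    · refine .single ⟨hlt, hτ p q hpq, ?_⟩
      simp only [Equiv.symm_apply_apply]
      omega
    · obtain ⟨r, hr⟩ : ∃ r : Fin n, (r : ℕ) = p + 1 := ⟨⟨p + 1, by omega⟩, rfl⟩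
      have hrp : τ r ≠ τ p := fun e => by
        have := τ.injective e
        omega
      have hrq : τ r ≠ τ q := fun e => by
        have := τ.injective e
        omega
      have left : τ r < τ p → closeDesc k τ (τ p) (τ r) := ih 0 hd p r (by omega)
      have right : τ q < τ r → closeDesc k τ (τ r) (τ q) :=
        ih (d - 1) (by omega) r q (by omega)
      rcases lt_or_gt_of_ne hrp with h1 | h1
      · rcases lt_or_gt_of_ne hrq with h2 | h2
        · refine (closeDesc_cut (left h1) h2 hlt).resolve_right fun h => ?_
          have := (closeDesc_coinv h).2
          simp only [Equiv.symm_apply_apply] at this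
          omega
        · exact (left h1).trans (right h2)
      · refine (closeDesc_cut (right (hlt.trans h1)) hlt h1).resolve_left fun h => ?_
        have := (closeDesc_coinv h).2
        simp only [Equiv.symm_apply_apply] at this
        omega

/-- Each class contains a permutation all of whose coinversions come from `closeDesc` chains. -/
lemma exists_recoil_min (k : ℕ) {n : ℕ} (τ : Equiv.Perm (Fin n)) :
    ∃ m : Equiv.Perm (Fin n), recoilCong k m τ ∧
      ∀ i j : Fin n, i < j → m.symm j < m.symm i → closeDesc k τ j i := by
  obtain ⟨m, hm, hmin⟩ := Set.exists_min_image {σ | recoilCong k σ τ}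
    (fun σ : Equiv.Perm (Fin n) => toLex (σ : Fin n → Fin n)) (Set.toFinite _)
    ⟨τ, Relation.EqvGen.refl τ⟩
  refine ⟨m, hm, fun i j hij hpos => ?_⟩
  have hasc : ∀ p q : Fin n, (q : ℕ) = (p : ℕ) + 1 → (m p : ℕ) ≤ (m q : ℕ) + k := by
    intro p q hpq
    by_contra! hlt
    have hs : recoilStep k m (m * Equiv.swap p q) := ⟨p, q, hpq, rfl, by omega⟩
    have hle := hmin _ (((Relation.EqvGen.rel _ _ hs).symm).trans _ _ _ hm)
    refine absurd hle (not_le_of_gt ?_)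
    exact Pi.lex_desc (f := (m : Fin n → Fin n)) (i := p) (j := q)
      (by omega) (by omega)
  rw [← closeDesc_congr hm]
  have := closeDesc_of_coinv hasc ((m.symm i : ℕ) - m.symm j - 1) (m.symm j) (m.symm i)
    (by omega) (by simpa using hij)
  simpa using this

/-- Complementation of values, `i ↦ n - 1 - i` on one-line notations over `Fin n`. -/
def complPerm {n : ℕ} (τ : Equiv.Perm (Fin n)) : Equiv.Perm (Fin n) := τ.trans Fin.revPerm

lemma complPerm_complPerm {n : ℕ} (τ : Equiv.Perm (Fin n)) : complPerm (complPerm τ) = τ := by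
  ext x
  simp [complPerm]

lemma weakLE_complPerm {n : ℕ} {τ σ : Equiv.Perm (Fin n)} (h : weakLE τ σ) :
    weakLE (complPerm σ) (complPerm τ) := by
  intro i j hij hσ
  have hc : ∀ (ρ : Equiv.Perm (Fin n)) (x), (complPerm ρ).symm x = ρ.symm x.rev := fun _ _ => rfl
  rw [hc, hc] at hσ ⊢
  by_contra hτ
  have hne : τ.symm j.rev ≠ τ.symm i.rev :=
    fun e => hij.ne' (Fin.rev_injective (τ.symm.injective e))
  have := h j.rev i.rev (Fin.rev_lt_rev.mpr hij) (by omega)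
  omega

lemma recoilCong_complPerm {k n : ℕ} {τ σ : Equiv.Perm (Fin n)} (h : recoilCong k τ σ) :
    recoilCong k (complPerm τ) (complPerm σ) := by
  induction h with
  | rel _ _ h =>
    obtain ⟨p, q, hpq, rfl, hlt⟩ := h
    refine .rel _ _ ⟨p, q, hpq, rfl, ?_⟩
    simp only [complPerm, Equiv.trans_apply, Fin.revPerm_apply, Fin.val_rev]
    omega
  | refl _ => exact .refl _
  | symm _ _ _ ih => exact ih.symm
  | trans _ _ _ _ _ ih₁ ih₂ => exact ih₁.trans _ _ _ ih₂

/-- For `k ≥ 1` and `n ≥ 1`, the `k`-recoil congruence is a lattice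
congruence of the weak order on `S_n`: every class has a weak-order minimum and maximum,
and the down/up projections are order preserving. -/
theorem recoil_congruence_is_lattice_congruence (k n : ℕ) (hk : 1 ≤ k) (hn : 1 ≤ n) :
    ∃ mn mx : Equiv.Perm (Fin n) → Equiv.Perm (Fin n),
      (∀ τ, recoilCong k (mn τ) τ ∧ recoilCong k (mx τ) τ ∧
        ∀ σ, recoilCong k σ τ → weakLE (mn τ) σ ∧ weakLE σ (mx τ)) ∧
      (∀ τ τ', weakLE τ τ' → weakLE (mn τ) (mn τ') ∧ weakLE (mx τ) (mx τ')) := by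
  choose mn hcong hcoinv using fun τ : Equiv.Perm (Fin n) => exists_recoil_min k τ
  have hmin : ∀ τ σ, recoilCong k σ τ → weakLE (mn τ) σ := fun τ σ h i j hij hpos =>
    (closeDesc_coinv (closeDesc_congr h ▸ hcoinv τ i j hij hpos)).2
  have hmono : ∀ τ τ', weakLE τ τ' → weakLE (mn τ) (mn τ') := fun τ τ' h i j hij hpos => by
    have hd := closeDesc_mono h (hcoinv τ i j hij hpos)
    rw [← closeDesc_congr (hcong τ')] at hd
    exact (closeDesc_coinv hd).2
  refine ⟨mn, fun τ => complPerm (mn (complPerm τ)), fun τ => ⟨hcong τ, ?_, fun σ h =>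
    ⟨hmin τ σ h, ?_⟩⟩, fun τ τ' h => ⟨hmono τ τ' h, ?_⟩⟩
  · simpa only [complPerm_complPerm] using recoilCong_complPerm (hcong (complPerm τ))
  · simpa only [complPerm_complPerm] using
      weakLE_complPerm (hmin _ _ (recoilCong_complPerm h))
  · exact weakLE_complPerm (hmono _ _ (weakLE_complPerm h))
end

section
/- Let n, n' ≥ 1, and let μ ≤ ω in the weak order on S_n and μ' ≤ ω' in the weak order on S_{n'}. Then the union of the shifted shuffles τ ⧢ τ' over all τ ∈ S_n with μ ≤ τ ≤ ω and all τ' ∈ S_{n'} with μ' ≤ τ' ≤ ω' equals the weak order interval {σ ∈ S_{n+n'} : μμ̄' ≤ σ ≤ ω̄'ω}, where μμ̄' denotes the shifted concatenation of μ and μ' (one-line notation μ₁⋯μ_n (μ'₁+n)⋯(μ'_{n'}+n)) and ω̄'ω denotes the permutation with one-line notation (ω'₁+n)⋯(ω'_{n'}+n) ω₁⋯ω_n. -/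
/-- `σ` belongs to the shifted shuffle `τ ⧢ τ'`: the values `0,…,n-1` appear in `σ` in the
same relative order as in `τ`, and the values `n,…,n+n'-1` appear in `σ` in the same
relative order as in the shifted word of `τ'`. -/
def shiftedShuffleMem {n n' : ℕ} (τ : Equiv.Perm (Fin n)) (τ' : Equiv.Perm (Fin n'))
    (σ : Equiv.Perm (Fin (n + n'))) : Prop :=
  (∀ i j : Fin n,
    (σ.symm (Fin.castAdd n' i) < σ.symm (Fin.castAdd n' j) ↔ τ.symm i < τ.symm j)) ∧
  (∀ i j : Fin n',
    (σ.symm (Fin.natAdd n i) < σ.symm (Fin.natAdd n j) ↔ τ'.symm i < τ'.symm j))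

/-- The shifted concatenation `μ μ̄'`: one-line notation `μ₁ ⋯ μ_n (μ'₁+n) ⋯ (μ'_{n'}+n)`. -/
def underConcat {n n' : ℕ} (μ : Equiv.Perm (Fin n)) (μ' : Equiv.Perm (Fin n')) :
    Equiv.Perm (Fin (n + n')) :=
  finSumFinEquiv.symm.trans ((Equiv.sumCongr μ μ').trans finSumFinEquiv)

/-- The permutation `ω̄' ω` with one-line notation `(ω'₁+n) ⋯ (ω'_{n'}+n) ω₁ ⋯ ω_n`. -/
def overConcat {n n' : ℕ} (ω : Equiv.Perm (Fin n)) (ω' : Equiv.Perm (Fin n')) :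
    Equiv.Perm (Fin (n + n')) :=
  (finCongr (Nat.add_comm n n')).trans
    ((finSumFinEquiv (m := n') (n := n)).symm.trans
      ((Equiv.sumCongr ω' ω).trans
        ((Equiv.sumComm (Fin n') (Fin n)).trans finSumFinEquiv)))

/-- Standardization: the relative order of the entries of an injective sequence `f` is the relative
order of the positions of the values in some permutation. -/
lemma exists_standardization {n : ℕ} {α : Type*} [LinearOrder α] (f : Fin n → α)
    (hf : Function.Injective f) :
    ∃ τ : Equiv.Perm (Fin n), ∀ i j, f i < f j ↔ τ.symm i < τ.symm j := by
  have hs : StrictMono (f ∘ Tuple.sort f) :=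
    (Tuple.monotone_sort f).strictMono_of_injective (hf.comp (Tuple.sort f).injective)
  refine ⟨Tuple.sort f, fun i j => ?_⟩
  rw [← hs.lt_iff_lt]
  simp

section Positions

variable {n n' : ℕ} (μ : Equiv.Perm (Fin n)) (μ' : Equiv.Perm (Fin n'))

lemma underConcat_symm_castAdd (i : Fin n) :
    (underConcat μ μ').symm (Fin.castAdd n' i) = Fin.castAdd n' (μ.symm i) := by
  simp [underConcat]

lemma underConcat_symm_natAdd (i : Fin n') :
    (underConcat μ μ').symm (Fin.natAdd n i) = Fin.natAdd n (μ'.symm i) := by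
  simp [underConcat]

lemma overConcat_symm_castAdd_val (i : Fin n) :
    ((overConcat μ μ').symm (Fin.castAdd n' i)).val = n' + (μ.symm i).val := by
  simp [overConcat, add_comm]

lemma overConcat_symm_natAdd_val (i : Fin n') :
    ((overConcat μ μ').symm (Fin.natAdd n i)).val = (μ'.symm i).val := by
  simp [overConcat]

end Positions

/-- The weak order on `S_{n+n'}`, split into conditions on pairs of small values, pairs of large
values, and mixed pairs. -/
lemma weakLE_add_iff {n n' : ℕ} (ρ σ : Equiv.Perm (Fin (n + n'))) :
    weakLE ρ σ ↔
      (∀ i j : Fin n, i < j → ρ.symm (Fin.castAdd n' j) < ρ.symm (Fin.castAdd n' i) →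
        σ.symm (Fin.castAdd n' j) < σ.symm (Fin.castAdd n' i)) ∧
      (∀ i j : Fin n', i < j → ρ.symm (Fin.natAdd n j) < ρ.symm (Fin.natAdd n i) →
        σ.symm (Fin.natAdd n j) < σ.symm (Fin.natAdd n i)) ∧
      (∀ (i : Fin n) (j : Fin n'), ρ.symm (Fin.natAdd n j) < ρ.symm (Fin.castAdd n' i) →
        σ.symm (Fin.natAdd n j) < σ.symm (Fin.castAdd n' i)) := by
  have hmix : ∀ (i : Fin n) (j : Fin n'), Fin.castAdd n' i < Fin.natAdd n j := fun i j => by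
    simp only [Fin.lt_def, Fin.val_castAdd, Fin.val_natAdd]
    omega
  constructor
  · intro H
    exact ⟨fun i j hij => H _ _ (hij),
      fun i j hij => H _ _ (by simpa using hij), fun i j => H _ _ (hmix i j)⟩
  · rintro ⟨Hl, Hh, Hm⟩ i j
    refine Fin.addCases (fun i => ?_) (fun i => ?_) i <;>
      refine Fin.addCases (fun j => ?_) (fun j => ?_) j <;> intro hij
    · exact Hl i j hij
    · exact Hm i j
    · exact absurd hij (hmix j i).asymm
    · exact Hh i j (by simpa using hij)

/-- Lying above `μμ̄'` is a condition on small pairs and on large pairs only, since `μμ̄'` has no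
mixed coinversions. -/
lemma underConcat_weakLE_iff {n n' : ℕ} {μ τ : Equiv.Perm (Fin n)} {μ' τ' : Equiv.Perm (Fin n')}
    {σ : Equiv.Perm (Fin (n + n'))} (hσ : shiftedShuffleMem τ τ' σ) :
    weakLE (underConcat μ μ') σ ↔ weakLE μ τ ∧ weakLE μ' τ' := by
  have hmix : ∀ (a : Fin n) (b : Fin n'), ¬ Fin.natAdd n b < Fin.castAdd n' a := fun a b => by
    simp only [Fin.lt_def, Fin.val_castAdd, Fin.val_natAdd]
    omega
  simp only [weakLE_add_iff, underConcat_symm_castAdd, underConcat_symm_natAdd, hσ.1, hσ.2, hmix]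
  simp [weakLE, (Fin.strictMono_castAdd n').lt_iff_lt]

/-- Lying below `ω̄'ω` is a condition on small pairs and on large pairs only, since every mixed pair
is a coinversion of `ω̄'ω`. -/
lemma weakLE_overConcat_iff {n n' : ℕ} {ω τ : Equiv.Perm (Fin n)} {ω' τ' : Equiv.Perm (Fin n')}
    {σ : Equiv.Perm (Fin (n + n'))} (hσ : shiftedShuffleMem τ τ' σ) :
    weakLE σ (overConcat ω ω') ↔ weakLE τ ω ∧ weakLE τ' ω' := by
  have hmix : ∀ (a : Fin n) (b : Fin n'), (b : ℕ) < n' + (a : ℕ) := fun a b => by omega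
  simp only [weakLE_add_iff, hσ.1, hσ.2]
  simp only [weakLE, Fin.lt_def, overConcat_symm_castAdd_val, overConcat_symm_natAdd_val, hmix]
  simp

/-- For weak order intervals `[μ, ω] ⊆ S_n` and `[μ', ω'] ⊆ S_{n'}`, the
union of the shifted shuffles `τ ⧢ τ'` over `τ ∈ [μ, ω]` and `τ' ∈ [μ', ω']` is exactly the
weak order interval `[μμ̄', ω̄'ω]` of `S_{n+n'}`. -/
theorem shuffle_of_weak_order_intervals (n n' : ℕ) (hn : 1 ≤ n) (hn' : 1 ≤ n')
    (μ ω : Equiv.Perm (Fin n)) (μ' ω' : Equiv.Perm (Fin n'))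
    (h : weakLE μ ω) (h' : weakLE μ' ω') :
    ∀ σ : Equiv.Perm (Fin (n + n')),
      (∃ (τ : Equiv.Perm (Fin n)) (τ' : Equiv.Perm (Fin n')),
        weakLE μ τ ∧ weakLE τ ω ∧ weakLE μ' τ' ∧ weakLE τ' ω' ∧ shiftedShuffleMem τ τ' σ)
      ↔ (weakLE (underConcat μ μ') σ ∧ weakLE σ (overConcat ω ω')) := by
  intro σ
  constructor
  · rintro ⟨τ, τ', h₁, h₂, h₃, h₄, hσ⟩
    exact ⟨(underConcat_weakLE_iff hσ).2 ⟨h₁, h₃⟩, (weakLE_overConcat_iff hσ).2 ⟨h₂, h₄⟩⟩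
  · rintro ⟨hlow, hupp⟩
    obtain ⟨τ, hτ⟩ := exists_standardization (fun i => σ.symm (Fin.castAdd n' i))
      (σ.symm.injective.comp (Fin.castAdd_injective n n'))
    obtain ⟨τ', hτ'⟩ := exists_standardization (fun i => σ.symm (Fin.natAdd n i))
      (σ.symm.injective.comp (Fin.natAdd_injective n' n))
    have hσ : shiftedShuffleMem τ τ' σ := ⟨hτ, hτ'⟩
    obtain ⟨h₁, h₃⟩ := (underConcat_weakLE_iff hσ).1 hlow
    obtain ⟨h₂, h₄⟩ := (weakLE_overConcat_iff hσ).1 hupp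
    exact ⟨τ, τ', h₁, h₂, h₃, h₄, hσ⟩
end

section
/- Let ≺ be a strict partial order on [n] and define the half-open cone C•(≺) = {x ∈ ℝⁿ : x_i ≤ x_j for all i ≺ j with i < j, and x_i < x_j for all i ≺ j with i > j}. For a permutation τ ∈ S_n, let C•(τ) be the half-open cone associated in the same way to the total order τ₁ ≺ τ₂ ≺ ⋯ ≺ τ_n, i.e. C•(τ) = {x ∈ ℝⁿ : x_{τ_p} ≤ x_{τ_{p+1}} if τ_p < τ_{p+1}, and x_{τ_p} < x_{τ_{p+1}} if τ_p > τ_{p+1}, for all p ∈ [n−1]}. Then the cones C•(τ), where τ ranges over the linear extensions of ≺ (permutations τ such that i ≺ j implies τ⁻¹(i) < τ⁻¹(j)), partition C•(≺): every point x ∈ C•(≺) belongs to C•(τ) for exactly one linear extension τ of ≺. -/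
/-!
Order the indices by the pairs `(x i, i)`, compared lexicographically. The condition on a pair of
adjacent entries in the definition of `C•(τ)` says exactly that these pairs increase from
`τ p` to `τ (p + 1)`, so `x ∈ C•(τ)` iff `τ` lists the indices in lexicographic order of
`(x i, i)`; there is exactly one such `τ`, Mathlib's `Tuple.sort x`. The condition
`x ∈ C•(≺)` says that `i ≺ j` forces `(x i, i) < (x j, j)`, so this `τ` is a linear extension of `≺`.
-/

/-- The half-open cone `C•(≺)` of a relation `r` on `Fin n`:
`x_i ≤ x_j` for all `i ≺ j` with `i < j`, and `x_i < x_j` for all `i ≺ j` with `i > j`. -/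
def memConeOrder {n : ℕ} (r : Fin n → Fin n → Prop) (x : Fin n → ℝ) : Prop :=
  ∀ i j : Fin n, r i j → ((i < j → x i ≤ x j) ∧ (j < i → x i < x j))

/-- The half-open cone `C•(τ)` of a permutation `τ`, defined by the adjacent conditions
`x_{τ_p} ≤ x_{τ_{p+1}}` if `τ_p < τ_{p+1}` and `x_{τ_p} < x_{τ_{p+1}}` if `τ_p > τ_{p+1}`. -/
def memConePerm {n : ℕ} (τ : Equiv.Perm (Fin n)) (x : Fin n → ℝ) : Prop :=
  ∀ p q : Fin n, (q : ℕ) = (p : ℕ) + 1 →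
    ((τ p < τ q → x (τ p) ≤ x (τ q)) ∧ (τ q < τ p → x (τ p) < x (τ q)))

/-- `τ` is a linear extension of the relation `r`: `i ≺ j` implies that `i` appears before
`j` in the one-line notation of `τ`. -/
def isLinearExtension {n : ℕ} (r : Fin n → Fin n → Prop) (τ : Equiv.Perm (Fin n)) : Prop :=
  ∀ i j : Fin n, r i j → τ.symm i < τ.symm j

/-- For distinct indices, the half-open inequality defining the cones is the lexicographic
comparison of the pairs `(x i, i)`. -/
lemma halfOpen_iff_toLex_lt {n : ℕ} (x : Fin n → ℝ) {i j : Fin n} (hij : i ≠ j) :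
    ((i < j → x i ≤ x j) ∧ (j < i → x i < x j)) ↔ toLex (x i, i) < toLex (x j, j) := by
  rw [Prod.Lex.toLex_lt_toLex]
  rcases lt_or_gt_of_ne hij with h | h
  · simp [h, h.not_gt, le_iff_lt_or_eq]
  · simp [h, h.not_gt]

lemma memConePerm_iff_strictMono {n : ℕ} (τ : Equiv.Perm (Fin n)) (x : Fin n → ℝ) :
    memConePerm τ x ↔ StrictMono fun p => toLex (x (τ p), τ p) := by
  have key : ∀ p q : Fin n, p ≠ q →
      (((τ p < τ q → x (τ p) ≤ x (τ q)) ∧ (τ q < τ p → x (τ p) < x (τ q))) ↔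
        toLex (x (τ p), τ p) < toLex (x (τ q), τ q)) := fun p q h =>
    halfOpen_iff_toLex_lt x (τ.injective.ne h)
  constructor
  · intro h
    cases n with
    | zero => exact fun p => p.elim0
    | succ m =>
      refine Fin.strictMono_iff_lt_succ.2 fun p => ?_
      exact (key _ _ p.castSucc_lt_succ.ne).1 (h _ _ (by simp))
  · intro h p q hpq
    have hlt : p < q := by rw [Fin.lt_def]; omega
    exact (key p q hlt.ne).2 (h hlt)

lemma memConePerm_iff_eq_sort {n : ℕ} (τ : Equiv.Perm (Fin n)) (x : Fin n → ℝ) :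
    memConePerm τ x ↔ τ = Tuple.sort x := by
  rw [memConePerm_iff_strictMono, Tuple.eq_sort_iff']
  rfl

/-- For a strict partial order `≺` on `[n]`, the half-open cones `C•(τ)`
of the linear extensions `τ` of `≺` partition the half-open cone `C•(≺)`: every point of
`C•(≺)` belongs to `C•(τ)` for exactly one linear extension `τ` of `≺`. -/
theorem cone_partitioned_by_linear_extensions
    (n : ℕ) (r : Fin n → Fin n → Prop)
    (hirr : ∀ i, ¬ r i i) (htrans : ∀ i j l, r i j → r j l → r i l)
    (x : Fin n → ℝ) (hx : memConeOrder r x) :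
    ∃! τ : Equiv.Perm (Fin n), isLinearExtension r τ ∧ memConePerm τ x := by
  have hsort : memConePerm (Tuple.sort x) x := (memConePerm_iff_eq_sort _ x).2 rfl
  refine ⟨Tuple.sort x, ⟨fun i j hij => ?_, hsort⟩,
    fun τ hτ => (memConePerm_iff_eq_sort τ x).1 hτ.2⟩
  have hne : i ≠ j := fun h => hirr j (h ▸ hij)
  rw [← ((memConePerm_iff_strictMono _ x).1 hsort).lt_iff_lt]
  simpa only [Equiv.apply_symm_apply] using (halfOpen_iff_toLex_lt x hne).1 (hx i j hij)
end
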